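/- Let E be a 1-rooted embanked state, m ∈ [0, 2^{2k} − 2) with ν_2(m) odd and h(N^{−1}(E)) = (2^{2k} − m − 1, 2^{2k} + m), let m′ be the smallest element of [0, 2^{2k} − 2] with m′ > m and ν_2(m′) odd, and let E′ be the unique 1-rooted embanked state with E ↦ E′ and h(N^{−1}(E′)) = (2^{2k} − m′ − 1, 2^{2k} + m′). Then for every j ∈ [0, 2k+1], κ_{E→E′}(j) equals the number of integers e ∈ [m+1, m′] divisible by max(1, 2^{j−1}). -/

import Mathlib

/-!
Write `2 k = l + 2`; the states considered have length `l + 4`, and lists are compared entrywise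
through `mk n f`, the state of length `n` with entries `f`.

Between two consecutive Zero, Halve or Overflow rules the process is a Gray-code counter: if the
counter is `n`, then `a_(i+1) = B i ± ⟨n / 2^(i+1)⟩` with `B` even, and each Increment moves `n` by
one and lowers `a_0` by one (`cf_step`). Running an empty state `(…, f 1, f 0)` through Zero,
a descent, Halve, an ascent, Halve and a second descent yields `core`: with
`h₁ = 2^(l+2) - 1 - f 0 / 2` and `h₂ = 2^(l+1) + f 1 / 2`, these are the values of `h`, and the
entries of the next empty state are the affine expression `Nf` in `f` and in the numbers
`⟨h₁ / 2^i⟩`, `⟨h₂ / 2^i⟩`.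

From `Nf` one reads off that a single bump is followed by a single bump (`propagate`): a bump at
`j ≥ 2` moves to `j - 2`, while a bump at `0` or `1` changes `h₁` or `h₂` by one, hence changes one
Gray-code digit. Since `N(S_k) = S_k[2 k + 1]`, each `N^(s+1)(S_k)` is a single bump of `N^s(S_k)`,
as long as the counts stay in range; and a state for which they do not is not followed by a bump
(`small_of_bump`), so the orbit of `N'` never leaves this range (`orbit`). Twice `κ_{E→E'}(j)` is
therefore the total increase of the entry `j` from `E` to `E'` (`kappa_telescope`).

It remains to compute this increase. For `F = N⁻¹(E)` the equation `N(F) = F[1]`, with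
`h(F) = (2^(2k) - m - 1, 2^(2k) + m)`, expresses `a_(i+1)(F)` through `a_(i+3)(F)` and `m`, so all
entries of `F` are determined from the left; comparing the two recursions gives
`a_(i+1)(F') - a_(i+1)(F) = 2 (⌊m' / 2^i⌋ - ⌊m / 2^i⌋)` and `a_0(F') - a_0(F) = 2 (m' - m)`
(`Turn.diff`). Half of this is the number of multiples of `2^i`, respectively of `1`, in
`[m + 1, m']`. Finally, `N^t(E) = E'` determines `t`, because every step of `P` other than Halt
increases (sum, length, `-a_0`) lexicographically (`aperiodic`).
-/

open scoped Classical

namespace Skelet17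

/-- The five kinds of transition rules. -/
inductive Rule
  | overflow | halt | zero | halve | increment
  deriving DecidableEq

/-- A state `(a_ℓ, …, a_1, a_0)` (written left to right, `a_0` rightmost) is stored
as the list `[a_0, a_1, …, a_ℓ]`, i.e. with the *rightmost* entry first. -/
abbrev State := List ℤ

/-- The leftmost entry `a_ℓ` of a state. -/
def leftmost (S : State) : ℤ := S.getLastD 0

/-- The entry `a_i(S)`. -/
def entry (S : State) (i : ℕ) : ℤ := S.getD i 0

/-- `ℓ(S) = |S| - 1`. -/
def ell (S : State) : ℕ := S.length - 1

/-- The Overflow rule applies: the leftmost entry is odd and all other entries are even. -/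
def OverflowCond (S : State) : Prop := Odd (leftmost S) ∧ ∀ x ∈ S.dropLast, Even x

/-- The Halt rule applies: all entries are even and the two leftmost entries are `0`. -/
def HaltCond (S : State) : Prop :=
  (∀ x ∈ S, Even x) ∧ S.getLastD 1 = 0 ∧ S.dropLast.getLastD 1 = 0

/-- The Zero rule applies: all entries are even and the Halt rule does not apply. -/
def ZeroCond (S : State) : Prop := (∀ x ∈ S, Even x) ∧ ¬ HaltCond S

/-- The Halve rule applies: `a_0 = -1` and none of the earlier rules applies. -/
def HalveCond (S : State) : Prop :=
  ¬ OverflowCond S ∧ ¬ HaltCond S ∧ ¬ ZeroCond S ∧ S.headD 0 = -1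

/-- The rule applied to a state (the first matching rule). -/
noncomputable def ruleOf (S : State) : Rule :=
  if OverflowCond S then .overflow
  else if HaltCond S then .halt
  else if ZeroCond S then .zero
  else if S.headD 0 = -1 then .halve
  else .increment

/-- The transition function `P`.  (On a Halt state the process stops; we set `P S = S` there.)
Recall the list stores `a_0` first, so e.g. the Overflow rule
`(2a_ℓ+1, 2a_{ℓ-1}, …, 2a_0) ↦ (0, 2a_ℓ+2, 2a_{ℓ-1}, …, 2a_0)` appends a `0` at the end of
the list and adds `1` to the previously last element. -/
noncomputable def P (S : State) : State :=
  match ruleOf S with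
  | .overflow => S.dropLast ++ [leftmost S + 1, 0]
  | .halt => S
  | .zero => (S.set 0 (S.headD 0 - 1)).set (S.length - 1) (leftmost S + 1) ++ [0, 0]
  | .halve => S.tail
  | .increment =>
      let i := S.findIdx (fun x => x % 2 != 0)   -- index of the rightmost odd entry
      (S.set (i + 1) (S.getD (i + 1) 0 + 1)).set 0 (S.headD 0 - 1)

/-- `S ↦ T` : some iterate of `P` sends `S` to `T`. -/
def Reaches (S T : State) : Prop := ∃ m : ℕ, P^[m] S = T

/-- `σ(S) = +1` if the sum of the entries is odd, `-1` if it is even. -/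
noncomputable def sigma (S : State) : ℤ := if Odd S.sum then 1 else -1

/-- `n(S)`: the natural number whose Gray code digits (least significant first) are
`a_1 mod 2, a_2 mod 2, …, a_ℓ mod 2`.  Equivalently (standard Gray-code decoding),
bit `i` of `n(S)` is the parity of `a_{i+1} + ⋯ + a_ℓ`. -/
def nOf (S : State) : ℕ :=
  ∑ i ∈ Finset.range (ell S),
    2 ^ i * ((∑ j ∈ Finset.Icc (i + 1) (ell S), entry S j) % 2).toNat

/-- `⟨a / 2^j⟩` : the nearest integer to `a / 2^j`, rounding half-integers up. -/
def nearest (j a : ℕ) : ℕ := (2 * a + 2 ^ j) / 2 ^ (j + 1)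

/-- `d_j(a, b) = |⟨a/2^j⟩ - ⟨b/2^j⟩|`. -/
def dd (j a b : ℕ) : ℕ := Nat.dist (nearest j a) (nearest j b)

/-- `S_k = (0, 2, 2^2, …, 2^{2k}, 0)`. -/
def Sk (k : ℕ) : State :=
  0 :: (((List.range (2 * k)).map fun i => (2 : ℤ) ^ (2 * k - i)) ++ [0])

/-- An empty state: `n(E) = 0`, `σ(E) = -1`, and the next rule applied is not Halt. -/
def IsEmptyState (E : State) : Prop :=
  E ≠ [] ∧ nOf E = 0 ∧ sigma E = -1 ∧ ruleOf E ≠ Rule.halt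

/-- `m` is the first positive time at which the trajectory of `E` is at an empty state. -/
def NextEmptyAt (E : State) (m : ℕ) : Prop :=
  0 < m ∧ IsEmptyState (P^[m] E) ∧ ∀ t, 0 < t → t < m → ¬ IsEmptyState (P^[t] E)

/-- `N(E)` : the next empty state after `E` (junk value `[]` if it does not exist). -/
noncomputable def N (E : State) : State :=
  if h : ∃ m, NextEmptyAt E m then P^[h.choose] E else []

/-- The rule applied at time `j` belongs to `T_E`, the sequence of rules from `E` to the
next empty state after `E` (all rules after `E` when no next empty state exists). -/
def InTE (E : State) (j : ℕ) : Prop := ∀ t, 0 < t → t ≤ j → ¬ IsEmptyState (P^[t] E)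

/-- Weakly embanked: `T_E` consists of one Zero rule at the start and contains at least two
Halve rules, and all other rules before the second Halve rule are Increment rules. -/
def WeaklyEmbanked (E : State) : Prop :=
  IsEmptyState E ∧
  ∃ j₁ j₂, 0 < j₁ ∧ j₁ < j₂ ∧ InTE E j₂ ∧
    ruleOf (P^[j₁] E) = Rule.halve ∧ ruleOf (P^[j₂] E) = Rule.halve ∧
    ∀ t, 0 < t → t < j₂ → t ≠ j₁ → ruleOf (P^[t] E) = Rule.increment

/-- Embanked: the next empty state `N(E)` exists and the non-Increment rules of `T_E` consist
of exactly one Zero rule at the start and exactly two Halve rules elsewhere. -/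
def Embanked (E : State) : Prop :=
  IsEmptyState E ∧
  ∃ m j₁ j₂, NextEmptyAt E m ∧ 0 < j₁ ∧ j₁ < j₂ ∧ j₂ < m ∧
    ruleOf (P^[j₁] E) = Rule.halve ∧ ruleOf (P^[j₂] E) = Rule.halve ∧
    ∀ t, 0 < t → t < m → t ≠ j₁ → t ≠ j₂ → ruleOf (P^[t] E) = Rule.increment

/-- `h_i(E)` (`i ∈ {1,2}`): the value of `n` at the state immediately *after* the `i`-th
Halve rule applied after `E`. -/
noncomputable def hVal (E : State) (i : ℕ) : ℕ :=
  nOf (P^[Nat.nth (fun j => ruleOf (P^[j] E) = Rule.halve) (i - 1) + 1] E)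

/-- `s_i(E)` (`i ∈ {1,2}`): the value of `n` at the state immediately *before* the `i`-th
Halve rule applied after `E`. -/
noncomputable def sVal (E : State) (i : ℕ) : ℕ :=
  nOf (P^[Nat.nth (fun j => ruleOf (P^[j] E) = Rule.halve) (i - 1)] E)

/-- `E[i]` : the state `E` with the entry `a_i` replaced by `a_i + 2`. -/
def bump (E : State) (i : ℕ) : State := E.set i (E.getD i 0 + 2)

/-- `N'(E) = N^{⌈(i+1)/2⌉}(E)` for an embanked state `E` with `N(E) = E[i]`
(junk value `E` if no such `i` exists). -/
noncomputable def N' (E : State) : State :=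
  if h : ∃ i, i < E.length ∧ N E = bump E i then N^[(h.choose + 2) / 2] E else E

/-- A rooted embanked state: an embanked state obtained from `S_k` by applying `N'`
some number of times. -/
def RootedEmbanked (k : ℕ) (E : State) : Prop :=
  Embanked E ∧ ∃ e : ℕ, N'^[e] (Sk k) = E

/-- `κ_{E→E'}(j)` : the number of steps `S ↦ N(S)` with `N(S) = S[j]` along the chain
`E, N(E), N²(E), …, N^[t](E) = E'`. -/
noncomputable def kappa (E : State) (t j : ℕ) : ℕ :=
  ((Finset.range t).filter fun s => N (N^[s] E) = bump (N^[s] E) j).card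

/-! ### States as functions of the index -/

/-- The state of length `n` with entries `a_i = f i`. -/
def mk (n : ℕ) (f : ℕ → ℤ) : State := (List.range n).map f

@[simp] lemma mk_length (n : ℕ) (f : ℕ → ℤ) : (mk n f).length = n := by simp [mk]

lemma mk_getD (n : ℕ) (f : ℕ → ℤ) (i : ℕ) :
    (mk n f).getD i 0 = if i < n then f i else 0 := by
  unfold mk
  split_ifs with h
  · simp [List.getD, h]
  · simp [List.getD, h]

lemma eq_mk (S : State) : S = mk S.length (fun i => S.getD i 0) := by
  apply List.ext_getElem
  · simp
  · intro i h1 h2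
    simp [mk, List.getD, h1]

lemma mk_congr {n : ℕ} {f g : ℕ → ℤ} (h : ∀ i < n, f i = g i) : mk n f = mk n g := by
  unfold mk
  apply List.map_congr_left
  intro i hi
  exact h i (List.mem_range.1 hi)

lemma mk_inj {n : ℕ} {f g : ℕ → ℤ} (h : mk n f = mk n g) (i : ℕ) (hi : i < n) : f i = g i := by
  have := congrArg (fun l => l.getD i 0) h
  simp only [mk_getD, if_pos hi] at this
  exact this

lemma mk_dropLast (n : ℕ) (f : ℕ → ℤ) : (mk (n + 1) f).dropLast = mk n f := by
  simp [mk, List.range_succ]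

lemma mk_getLastD (n : ℕ) (f : ℕ → ℤ) (d : ℤ) : (mk (n + 1) f).getLastD d = f n := by
  simp [mk, List.range_succ]

lemma mk_tail (n : ℕ) (f : ℕ → ℤ) : (mk (n + 1) f).tail = mk n (fun i => f (i + 1)) := by
  simp [mk, List.range_succ_eq_map, Function.comp_def]

lemma mk_headD (n : ℕ) (f : ℕ → ℤ) (d : ℤ) : (mk (n + 1) f).headD d = f 0 := by
  simp [mk, List.range_succ_eq_map]

lemma mk_set (n : ℕ) (f : ℕ → ℤ) (i : ℕ) (x : ℤ) :
    (mk n f).set i x = mk n (fun j => if j = i then x else f j) := by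
  apply List.ext_getElem
  · simp
  · intro j h1 h2
    simp only [mk, List.getElem_set, List.getElem_map, List.getElem_range]
    grind

lemma mk_snoc (n : ℕ) (f : ℕ → ℤ) (x : ℤ) :
    mk n f ++ [x] = mk (n + 1) (fun j => if j = n then x else f j) := by
  have : mk n f = mk n (fun j => if j = n then x else f j) :=
    mk_congr (fun i hi => by simp [hi.ne])
  rw [this]
  simp [mk, List.range_succ]

lemma mk_sum (n : ℕ) (f : ℕ → ℤ) : (mk n f).sum = ∑ i ∈ Finset.range n, f i := by
  simp [mk, Finset.sum_range, ← List.sum_ofFn, List.ofFn_eq_map, ← List.map_coe_finRange_eq_range]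
  rfl

lemma mk_allEven (n : ℕ) (f : ℕ → ℤ) : (∀ x ∈ mk n f, Even x) ↔ ∀ i < n, Even (f i) := by
  simp [mk]

lemma mk_overflow (n : ℕ) (f : ℕ → ℤ) :
    OverflowCond (mk (n + 1) f) ↔ Odd (f n) ∧ ∀ i < n, Even (f i) := by
  rw [OverflowCond, leftmost, mk_getLastD, mk_dropLast, mk_allEven]

lemma mk_halt (n : ℕ) (f : ℕ → ℤ) :
    HaltCond (mk (n + 2) f) ↔ (∀ i < n + 2, Even (f i)) ∧ f (n + 1) = 0 ∧ f n = 0 := by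
  rw [HaltCond, mk_allEven, mk_getLastD, mk_dropLast, mk_getLastD]

lemma bump_mk (n : ℕ) (f : ℕ → ℤ) (i : ℕ) :
    bump (mk n f) i = mk n (fun j => f j + if j = i then 2 else 0) := by
  rw [bump, mk_set, mk_getD]
  apply mk_congr
  intro j hj
  by_cases h : j = i
  · subst h; simp [hj]
  · simp [h]

/-- An Increment step whose rightmost odd entry is `a_j`. -/
lemma increment_step (n : ℕ) (f : ℕ → ℤ) (j : ℕ) (hj : j + 1 < n) (hodd : Odd (f j))
    (hev : ∀ i < j, Even (f i)) (h0 : f 0 ≠ -1) :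
    ruleOf (mk n f) = Rule.increment ∧
    P (mk n f) = mk n (fun i => if i = 0 then f 0 - 1 else if i = j + 1 then f (j + 1) + 1
      else f i) := by
  obtain ⟨n, rfl⟩ : ∃ m, n = m + 2 := ⟨n - 2, by omega⟩
  have hnall : ¬ ∀ i < n + 2, Even (f i) := fun h =>
    Int.not_even_iff_odd.2 hodd (h j (by omega))
  have hr : ruleOf (mk (n + 2) f) = Rule.increment := by
    unfold ruleOf
    rw [if_neg, if_neg, if_neg, if_neg]
    · rwa [mk_headD]
    · rintro ⟨h, -⟩; exact hnall ((mk_allEven _ _).1 h)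
    · rintro ⟨h, -⟩; exact hnall ((mk_allEven _ _).1 h)
    · rw [mk_overflow]
      rintro ⟨-, h⟩
      exact Int.not_even_iff_odd.2 hodd (h j (by omega))
  refine ⟨hr, ?_⟩
  have hidx : (mk (n + 2) f).findIdx (fun x => x % 2 != 0) = j := by
    rw [List.findIdx_eq (by simp; omega)]
    constructor
    · simp only [mk, List.getElem_map, List.getElem_range, bne_iff_ne]
      rw [Int.odd_iff] at hodd; omega
    · intro i hi
      have := hev i hi
      simp only [mk, List.getElem_map, List.getElem_range]
      rw [Int.even_iff] at this; simp [this]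
  unfold P
  rw [hr]
  simp only [hidx]
  rw [mk_set, mk_set, mk_getD, mk_headD, if_pos hj]

lemma exists_min_odd {n : ℕ} {f : ℕ → ℤ} (h : ¬ ∀ i < n, Even (f i)) :
    ∃ j < n, Odd (f j) ∧ ∀ i < j, Even (f i) := by
  push Not at h
  have hex : ∃ j, j < n ∧ ¬ Even (f j) := by simpa using h
  refine ⟨Nat.find hex, (Nat.find_spec hex).1, by simpa using (Nat.find_spec hex).2, ?_⟩
  intro i hi
  have := Nat.find_min hex hi
  have h2 := (Nat.find_spec hex).1
  by_contra hc
  exact this ⟨by omega, hc⟩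

/-! ### A quantity increased by every step -/

/-- `S` precedes `T` in the lexicographic order on (sum, length, `-a_0`). -/
def Prec (S T : State) : Prop :=
  S.sum < T.sum ∨ (S.sum = T.sum ∧ (S.length < T.length ∨
    (S.length = T.length ∧ T.headD 0 < S.headD 0)))

lemma Prec.trans {S T U : State} (h1 : Prec S T) (h2 : Prec T U) : Prec S U := by
  unfold Prec at *; omega

lemma Prec.irrefl (S : State) : ¬ Prec S S := by
  unfold Prec; omega

lemma sum_pair (S : State) (x y : ℤ) : (S ++ [x, y]).sum = S.sum + x + y := by
  simp; ring

lemma P_overflow {S : State} (h : OverflowCond S) : P S = S.dropLast ++ [leftmost S + 1, 0] := by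
  simp [P, ruleOf, h]

lemma overflow_sum {S : State} (h : OverflowCond S) :
    (P S).sum = S.sum + 1 ∧ (P S).length = S.length + 1 := by
  have hne : S ≠ [] := by rintro rfl; simp [OverflowCond, leftmost] at h
  rw [P_overflow h]
  constructor
  · have : S.sum = S.dropLast.sum + leftmost S := by
      conv_lhs => rw [← List.dropLast_append_getLast hne]
      simp [leftmost, List.getLastD_eq_getLast?, List.getLast?_eq_some_getLast hne]
    rw [sum_pair, this]; ring
  · have := List.length_pos_iff.2 hne
    simp; omega

/-- Every non-halting step strictly increases (sum, length, `-a_0`) lexicographically. -/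
lemma P_prec (S : State) : P S = S ∨ Prec S (P S) := by
  by_cases ho : OverflowCond S
  · right; left
    rw [(overflow_sum ho).1]; omega
  by_cases hh : HaltCond S
  · left; simp [P, ruleOf, ho, hh]
  by_cases hz : ZeroCond S
  · right
    have hP : P S = (S.set 0 (S.headD 0 - 1)).set (S.length - 1) (leftmost S + 1) ++ [0, 0] := by
      simp [P, ruleOf, ho, hh, hz]
    rw [hP]
    have hlen : S.length < ((S.set 0 (S.headD 0 - 1)).set (S.length - 1) (leftmost S + 1)
        ++ [0, 0]).length := by simp
    suffices hs : S.sum ≤ ((S.set 0 (S.headD 0 - 1)).set (S.length - 1) (leftmost S + 1)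
        ++ [0, 0]).sum by
      unfold Prec; omega
    rw [sum_pair]
    rw [eq_mk S]
    generalize (fun i => S.getD i 0) = f
    generalize S.length = n
    rcases n with _ | n
    · simp [mk]
    · simp only [leftmost, mk_length, Nat.add_sub_cancel, mk_set, mk_getLastD, mk_headD, mk_sum]
      rw [Finset.sum_range_succ, Finset.sum_range_succ]
      rcases n with _ | n
      · simp
      · rw [Finset.sum_range_succ', Finset.sum_range_succ']
        have : ∀ i ∈ Finset.range n, f (i + 1) =
          (if i + 1 = n + 1 then f (n + 1) + 1 else if i + 1 = 0 then f 0 - 1 else f (i + 1)) := by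
          intro i hi
          have := Finset.mem_range.1 hi
          rw [if_neg (by omega), if_neg (by omega)]
        rw [← Finset.sum_congr rfl this]
        simp
        linarith
  by_cases hv : S.headD 0 = -1
  · right; left
    have hP : P S = S.tail := by
      unfold P
      rw [show ruleOf S = Rule.halve by
        rw [ruleOf, if_neg ho, if_neg hh, if_neg hz, if_pos hv]]
    rw [hP]
    rcases S with _ | ⟨a, l⟩
    · simp at hv
    · simp at hv ⊢; omega
  · right
    rw [eq_mk S] at *
    generalize (fun i => S.getD i 0) = f at *
    generalize S.length = n at *
    have hna : ¬ ∀ i < n, Even (f i) := by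
      intro h
      exact hz ⟨(mk_allEven _ _).2 h, hh⟩
    obtain ⟨j, hj, hodd, hev⟩ := exists_min_odd hna
    obtain ⟨n, rfl⟩ : ∃ m, n = m + 1 := ⟨n - 1, by omega⟩
    have hj' : j < n := by
      by_contra hc
      have : j = n := by omega
      subst this
      exact ho ((mk_overflow _ _).2 ⟨hodd, hev⟩)
    rw [mk_headD] at hv
    have := (increment_step (n + 1) f j (by omega) hodd hev hv).2
    rw [this]
    right
    refine ⟨?_, Or.inr ⟨by simp, by rw [mk_headD, mk_headD]; simp⟩⟩
    rw [mk_sum, mk_sum, Finset.sum_range_succ', Finset.sum_range_succ']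
    have : ∀ i ∈ Finset.range n, (if i + 1 = 0 then f 0 - 1 else if i + 1 = j + 1 then f (j + 1) + 1
      else f (i + 1)) = f (i + 1) + if i = j then 1 else 0 := by
      intro i hi
      grind
    rw [Finset.sum_congr rfl this, Finset.sum_add_distrib, Finset.sum_ite_eq']
    simp [hj']

lemma iter_prec (S : State) (n : ℕ) : P^[n] S = S ∨ Prec S (P^[n] S) := by
  induction n with
  | zero => left; rfl
  | succ n ih =>
    rw [Function.iterate_succ_apply']
    rcases P_prec (P^[n] S) with h | h
    · rwa [h]
    · rcases ih with h2 | h2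
      · rw [h2] at h ⊢; exact Or.inr h
      · exact Or.inr (h2.trans h)

/-- Along a trajectory the pair (sum, length) is weakly increasing lexicographically. -/
lemma iter_weak (S : State) (n : ℕ) :
    S.sum < (P^[n] S).sum ∨ (S.sum = (P^[n] S).sum ∧ S.length ≤ (P^[n] S).length) := by
  rcases iter_prec S n with h | h
  · rw [h]; simp
  · unfold Prec at h; omega

/-! ### Gray-code counting -/

/-- The nearest integer `⟨n / 2^(i+1)⟩`, whose parity is a Gray-code digit of `n`, written as the
difference `⌊n / 2^i⌋ - ⌊n / 2^(i+1)⌋` so that sums over `i` telescope. -/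
def r (n i : ℕ) : ℤ := ((n / 2 ^ i : ℕ) : ℤ) - ((n / 2 ^ (i + 1) : ℕ) : ℤ)

lemma r_zero (i : ℕ) : r 0 i = 0 := by simp [r]

lemma r_big {n i : ℕ} (h : n < 2 ^ i) : r n i = 0 := by
  have h2 : n < 2 ^ (i + 1) := by rw [pow_succ]; omega
  simp [r, Nat.div_eq_of_lt h, Nat.div_eq_of_lt h2]

lemma div_pow_succ (n i : ℕ) : n / 2 ^ (i + 1) = n / 2 / 2 ^ i := by
  rw [pow_succ', Nat.div_div_eq_div_mul]

lemma r_double (h i : ℕ) : r (2 * h) (i + 1) = r h i := by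
  unfold r
  rw [div_pow_succ, div_pow_succ]
  simp

lemma r_double_add_one (h i : ℕ) : r (2 * h + 1) (i + 1) = r h i := by
  unfold r
  rw [div_pow_succ, div_pow_succ, show (2 * h + 1) / 2 = h by omega]

lemma div_of_lt {v q i : ℕ} (h : i ≤ v) : 2 ^ v * q / 2 ^ i = 2 ^ (v - i) * q := by
  obtain ⟨d, rfl⟩ := Nat.exists_eq_add_of_le h
  rw [pow_add, mul_assoc, Nat.mul_div_cancel_left _ (by positivity)]
  simp

lemma div_pred_of_le {v q i : ℕ} (h : i ≤ v) :
    (2 ^ v * (2 * q + 1) - 1) / 2 ^ i = 2 ^ (v - i) * (2 * q + 1) - 1 := by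
  obtain ⟨d, rfl⟩ := Nat.exists_eq_add_of_le h
  rw [Nat.add_sub_cancel_left, pow_add, mul_assoc]
  have hp : 0 < 2 ^ i := by positivity
  have hp2 : 0 < 2 ^ d * (2 * q + 1) := by positivity
  obtain ⟨a, ha⟩ : ∃ a, 2 ^ d * (2 * q + 1) = a + 1 := ⟨_, (Nat.succ_pred_eq_of_pos hp2).symm⟩
  rw [ha, Nat.add_sub_cancel]
  have hm : 2 ^ i * (a + 1) = a * 2 ^ i + 2 ^ i := by ring
  have hm2 : (a + 1) * 2 ^ i = a * 2 ^ i + 2 ^ i := by ring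
  exact Nat.div_eq_of_lt_le (by omega) (by omega)

lemma div_pred_of_gt {v q i : ℕ} (h : v < i) :
    (2 ^ v * (2 * q + 1) - 1) / 2 ^ i = 2 ^ v * (2 * q + 1) / 2 ^ i := by
  obtain ⟨d, rfl⟩ := Nat.exists_eq_add_of_lt h
  rw [show v + d + 1 = v + (1 + d) by ring, pow_add, ← Nat.div_div_eq_div_mul,
    ← Nat.div_div_eq_div_mul, div_pred_of_le le_rfl, div_of_lt le_rfl, pow_add,
    ← Nat.div_div_eq_div_mul, ← Nat.div_div_eq_div_mul]
  congr 1
  simp; omega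

/-- Passing from `N - 1` to `N = 2^v * odd` changes exactly one digit, the one of index `v`. -/
lemma r_diff (v q i : ℕ) : r (2 ^ v * (2 * q + 1)) i
    = r (2 ^ v * (2 * q + 1) - 1) i + if i = v then 1 else 0 := by
  unfold r
  rcases lt_trichotomy i v with h | h | h
  · rw [div_of_lt h.le, div_of_lt (show i + 1 ≤ v from h), div_pred_of_le h.le,
      div_pred_of_le (show i + 1 ≤ v from h), if_neg h.ne]
    have h1 : 1 ≤ 2 ^ (v - i) * (2 * q + 1) := Nat.succ_le_of_lt (by positivity)
    have h2 : 1 ≤ 2 ^ (v - (i + 1)) * (2 * q + 1) := Nat.succ_le_of_lt (by positivity)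
    push_cast [h1, h2]; ring
  · subst h
    rw [div_of_lt le_rfl, div_pred_of_le le_rfl, div_pred_of_gt (Nat.lt_succ_self i)]
    simp; ring
  · rw [div_pred_of_gt h, div_pred_of_gt (show v < i + 1 by omega)]
    simp [h.ne']

lemma r_even {v q i : ℕ} (h : i + 1 < v) : Even (r (2 ^ v * (2 * q + 1)) i) := by
  unfold r
  obtain ⟨d, rfl⟩ : ∃ d, v = i + 2 + d := Nat.exists_eq_add_of_le h
  rw [div_of_lt (by omega), div_of_lt (by omega), show i + 2 + d - i = d + 2 by omega,
    show i + 2 + d - (i + 1) = d + 1 by omega]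
  refine ⟨2 ^ d * (2 * q + 1), ?_⟩
  push_cast
  ring

lemma r_odd {v q i : ℕ} (h : i + 1 = v) : Odd (r (2 ^ v * (2 * q + 1)) i) := by
  unfold r
  subst h
  rw [div_of_lt (by omega), div_of_lt (by omega)]
  refine ⟨q, ?_⟩
  push_cast
  simp
  ring

/-- Entries of a state in the course of a Gray-code count: `a_0 = c` and
`a_{i+1} = B i + s * ⟨n / 2^(i+1)⟩`, with `B` even, `s = 1` when counting up and `s = -1` when
counting down. -/
def cf (B : ℕ → ℤ) (s c : ℤ) (n : ℕ) : ℕ → ℤ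
  | 0 => c
  | i + 1 => B i + s * r n i

lemma sum_r (n i m : ℕ) : ∑ j ∈ Finset.range m, r n (i + j) =
    ((n / 2 ^ i : ℕ) : ℤ) - ((n / 2 ^ (i + m) : ℕ) : ℤ) := by
  induction m with
  | zero => simp
  | succ m ih =>
    rw [Finset.sum_range_succ, ih, r]
    rw [← add_assoc]
    ring

lemma cf_sum_parity {L : ℕ} {B : ℕ → ℤ} {s c : ℤ} {n : ℕ} (hB : ∀ i < L, Even (B i))
    (hs : s = 1 ∨ s = -1) (hn : n < 2 ^ L) :
    Even ((mk (L + 1) (cf B s c n)).sum) ↔ Even (c + n) := by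
  rw [mk_sum, Finset.sum_range_succ']
  simp only [cf]
  rw [Finset.sum_add_distrib, ← Finset.mul_sum]
  have h1 := sum_r n 0 L
  simp only [zero_add, pow_zero, Nat.div_one, Nat.div_eq_of_lt hn] at h1
  rw [h1]
  have h2 : Even (∑ i ∈ Finset.range L, B i) :=
    Finset.even_sum _ fun i hi => hB i (Finset.mem_range.1 hi)
  obtain ⟨z, hz⟩ := h2
  rw [hz]
  rcases hs with rfl | rfl <;> simp only [Int.even_iff] <;> push_cast <;> omega

lemma cf_nOf {L : ℕ} {B : ℕ → ℤ} {s c : ℤ} {n : ℕ} (hB : ∀ i < L, Even (B i))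
    (hs : s = 1 ∨ s = -1) (hn : n < 2 ^ L) : nOf (mk (L + 1) (cf B s c n)) = n := by
  unfold nOf ell
  simp only [mk_length, Nat.add_sub_cancel]
  have key : ∀ i ∈ Finset.range L, 2 ^ i * ((∑ j ∈ Finset.Icc (i + 1) L,
      entry (mk (L + 1) (cf B s c n)) j) % 2).toNat = 2 ^ i * (n / 2 ^ i % 2) := by
    intro i hi
    have hi := Finset.mem_range.1 hi
    congr 1
    have h1 : ∑ j ∈ Finset.Icc (i + 1) L, entry (mk (L + 1) (cf B s c n)) j
        = ∑ j ∈ Finset.range (L - i), (B (i + j) + s * r n (i + j)) := by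
      rw [← Finset.Ico_succ_right_eq_Icc, Finset.sum_Ico_eq_sum_range]
      apply Finset.sum_congr
      · congr 1; simp
      · intro j hj
        have := Finset.mem_range.1 hj
        rw [entry, mk_getD, if_pos (by omega), show i + 1 + j = (i + j) + 1 by ring]
        rfl
    rw [h1, Finset.sum_add_distrib, ← Finset.mul_sum, sum_r,
      show i + (L - i) = L by omega, Nat.div_eq_of_lt hn]
    have h2 : Even (∑ j ∈ Finset.range (L - i), B (i + j)) :=
      Finset.even_sum _ fun j hj => hB _ (by have := Finset.mem_range.1 hj; omega)
    obtain ⟨z, hz⟩ := h2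
    rw [hz]
    rcases hs with rfl | rfl <;> omega
  rw [Finset.sum_congr rfl key]
  have : ∀ m, ∑ i ∈ Finset.range m, 2 ^ i * (n / 2 ^ i % 2) = n % 2 ^ m := by
    intro m
    induction m with
    | zero => simp [Nat.mod_one]
    | succ m ih => rw [Finset.sum_range_succ, ih, Nat.mod_pow_succ]
  rw [this, Nat.mod_eq_of_lt hn]

/-- One Increment step moves the Gray-code counter by one, in the direction `s`. -/
lemma cf_step {L : ℕ} {B : ℕ → ℤ} {s c : ℤ} {n n' N : ℕ} (hB : ∀ i < L, Even (B i))
    (h : (s = 1 ∧ n + 1 = N ∧ n' = N) ∨ (s = -1 ∧ n = N ∧ n' + 1 = N))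
    (hN : N < 2 ^ L) (hc : Even (c + N)) (hc1 : c ≠ -1) :
    ruleOf (mk (L + 1) (cf B s c n)) = Rule.increment ∧
    P (mk (L + 1) (cf B s c n)) = mk (L + 1) (cf B s (c - 1) n') := by
  obtain ⟨v, q, hvq⟩ : ∃ v q, N = 2 ^ v * (2 * q + 1) := by
    obtain ⟨v, m, ⟨q, hq⟩, hm⟩ := Nat.exists_eq_two_pow_mul_odd (n := N) (by omega)
    exact ⟨v, q, by rw [hm, hq]⟩
  have hvL : v < L := by
    have : 2 ^ v < 2 ^ L := lt_of_le_of_lt (by rw [hvq]; exact Nat.le_mul_of_pos_right _ (by omega)) hN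
    exact (Nat.pow_lt_pow_iff_right (by norm_num)).1 this
  -- the digits of index other than `v` are those of `N`
  have hdig : ∀ i, i ≠ v → r n i = r N i := by
    intro i hi
    have h3 := r_diff v q i
    rw [← hvq, if_neg hi, add_zero] at h3
    rcases h with ⟨-, h1, h2⟩ | ⟨-, h1, h2⟩
    · rw [h3]; congr 1; omega
    · rw [h1]
  have hnew : ∀ i, s * r n' i = s * r n i + if i = v then 1 else 0 := by
    intro i
    have h3 := r_diff v q i
    rw [← hvq] at h3
    rcases h with ⟨hs, h1, h2⟩ | ⟨hs, h1, h2⟩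
    · rw [h2, h3, hs, show n = N - 1 by omega]; ring
    · rw [h1, hs, h3, show n' = N - 1 by omega]; ring
  have hsO : ∀ x : ℤ, Odd x → Odd (s * x) := by
    rcases h with ⟨rfl, -⟩ | ⟨rfl, -⟩ <;> intro x hx <;> simpa using hx
  have hodd : Odd (cf B s c n v) := by
    rcases v with _ | v
    · rw [Int.even_iff] at hc
      simp only [cf, Int.odd_iff]
      omega
    · simp only [cf]
      rw [hdig v (by omega), hvq]
      exact (hB v (by omega)).add_odd (hsO _ (r_odd rfl))
  have heven : ∀ i < v, Even (cf B s c n i) := by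
    intro i hi
    rcases i with _ | i
    · obtain ⟨w, rfl⟩ : ∃ w, v = w + 1 := ⟨v - 1, by omega⟩
      simp only [cf]
      have : (N : ℤ) = 2 * (2 ^ w * (2 * q + 1)) := by rw [hvq]; push_cast; ring
      rw [Int.even_iff] at hc ⊢
      omega
    · simp only [cf]
      rw [hdig i (by omega), hvq]
      exact (hB i (by omega)).add ((r_even (by omega)).mul_left s)
  obtain ⟨h1, h2⟩ := increment_step (L + 1) (cf B s c n) v (by omega) hodd heven hc1
  refine ⟨h1, h2.trans (mk_congr ?_)⟩
  intro i _
  rcases i with _ | i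
  · simp [cf]
  · simp only [cf, hnew]
    by_cases hi : i = v
    · subst hi; simp; ring
    · simp [hi]

/-- A run of `t` Increment steps counting down. -/
lemma run_down {L : ℕ} {B : ℕ → ℤ} (hB : ∀ i < L, Even (B i)) (t : ℕ) :
    ∀ {c : ℤ} {n : ℕ}, n < 2 ^ L → Even (c + n) → t ≤ n → (t : ℤ) ≤ c + 1 →
    P^[t] (mk (L + 1) (cf B (-1) c n)) = mk (L + 1) (cf B (-1) (c - t) (n - t)) := by
  induction t with
  | zero => intro c n _ _ _ _; simp
  | succ t ih =>
    intro c n hn hc htn htc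
    push_cast at htc
    rw [Function.iterate_succ_apply', ih hn hc (by omega) (by omega)]
    rw [(cf_step (n' := n - (t + 1)) hB (Or.inr ⟨rfl, rfl, by omega⟩) (by omega)
      (by simp only [Int.even_iff] at *; omega) (by omega)).2]
    congr 2
    push_cast; ring

/-- A run of `t` Increment steps counting up. -/
lemma run_up {L : ℕ} {B : ℕ → ℤ} (hB : ∀ i < L, Even (B i)) (t : ℕ) :
    ∀ {c : ℤ} {n : ℕ}, n + t < 2 ^ L → Odd (c + n) → (t : ℤ) ≤ c + 1 →
    P^[t] (mk (L + 1) (cf B 1 c n)) = mk (L + 1) (cf B 1 (c - t) (n + t)) := by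
  induction t with
  | zero => intro c n _ _ _; simp
  | succ t ih =>
    intro c n hn hc htc
    push_cast at htc
    rw [Function.iterate_succ_apply', ih (by omega) hc (by omega)]
    rw [(cf_step (n' := n + (t + 1)) hB (Or.inl ⟨rfl, rfl, by omega⟩) (by omega)
      (by simp only [Int.even_iff, Int.odd_iff] at *; omega) (by omega)).2]
    congr 2
    push_cast; ring

/-! ### From an empty state to the next one -/

lemma r_top (m i : ℕ) : r (2 ^ (m + 1) - 1) i =
    if i < m then 2 ^ (m - i) else if i = m then 1 else 0 := by
  have h := fun j (hj : j ≤ m + 1) => div_pred_of_le (q := 0) (v := m + 1) hj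
  simp only [mul_zero, zero_add, mul_one] at h
  split_ifs with h1 h2
  · rw [r, h i (by omega), h (i + 1) (by omega), show m + 1 - i = m - i + 1 by omega,
      show m + 1 - (i + 1) = m - i by omega]
    have : 0 < 2 ^ (m - i) := by positivity
    rw [pow_succ]
    push_cast [show 1 ≤ 2 ^ (m - i) from this, show 1 ≤ 2 ^ (m - i) * 2 by omega]
    ring
  · subst h2
    rw [r, h i (by omega), h (i + 1) (by omega)]
    simp
  · refine r_big ?_
    have : 2 ^ (m + 1) ≤ 2 ^ i := Nat.pow_le_pow_right (by norm_num) (by omega)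
    have : 0 < 2 ^ (m + 1) := by positivity
    omega

lemma halve_step (n : ℕ) (f : ℕ → ℤ) (h : f 0 = -1) :
    ruleOf (mk (n + 2) f) = Rule.halve ∧ P (mk (n + 2) f) = mk (n + 1) (fun i => f (i + 1)) ∧
    (P (mk (n + 2) f)).sum = (mk (n + 2) f).sum + 1 := by
  have hodd : ¬ Even (f 0) := by rw [h]; decide
  have hr : ruleOf (mk (n + 2) f) = Rule.halve := by
    unfold ruleOf
    rw [if_neg, if_neg, if_neg, if_pos]
    · rwa [mk_headD]
    · rintro ⟨hc, -⟩; exact hodd ((mk_allEven _ _).1 hc 0 (by omega))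
    · rintro ⟨hc, -⟩; exact hodd ((mk_allEven _ _).1 hc 0 (by omega))
    · rw [mk_overflow]
      rintro ⟨-, hc⟩
      exact hodd (hc 0 (by omega))
  have hP : P (mk (n + 2) f) = mk (n + 1) (fun i => f (i + 1)) := by
    unfold P
    rw [hr]
    simp only [mk_tail]
  refine ⟨hr, hP, ?_⟩
  rw [hP, mk_sum, mk_sum, Finset.sum_range_succ' _ (n + 1), h]
  ring

/-- The entries `f i` of a state of length `l + 4` (so `ℓ = l + 3`) satisfy the conditions under
which the transition to the next empty state is analysed. -/
structure Pre (l : ℕ) (f : ℕ → ℤ) : Prop where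
  ev : ∀ i, Even (f i)
  zero : ∀ i, l + 3 < i → f i = 0
  nn0 : 0 ≤ f 0
  nn1 : 0 ≤ f 1
  low2 : 2 ^ (l + 1) ≤ f 2
  top : f (l + 2) ≠ 0

/-- Even parts of the entries after the Zero rule, which sets the counter to `2^(l+3) - 1`: the
entry `a_(i+1)` is `B0 l f i - r n i` as long as the counter `n` runs down from there. -/
def B0 (l : ℕ) (f : ℕ → ℤ) (i : ℕ) : ℤ :=
  f (i + 1) + r (2 ^ (l + 3) - 1) i + if i = l + 2 then 1 else 0

/-- Even parts of the entries after the first Halve rule, applied at counter value `2 h₁ + 1`. -/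
def B1 (l : ℕ) (f : ℕ → ℤ) (h₁ : ℕ) (i : ℕ) : ℤ := B0 l f (i + 1) - 2 * r h₁ i

/-- Even parts of the entries after the second Halve rule, applied at counter value `2 h₂`. -/
def B2 (l : ℕ) (f : ℕ → ℤ) (h₁ h₂ : ℕ) (i : ℕ) : ℤ := B1 l f h₁ (i + 1) + 2 * r h₂ i

/-- Entries of the next empty state, reached when the counter has run down from `h₂` to `0`. -/
def Nf (l : ℕ) (f : ℕ → ℤ) (h₁ h₂ : ℕ) : ℕ → ℤ
  | 0 => B1 l f h₁ 0
  | i + 1 => B2 l f h₁ h₂ i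

lemma B0_even {l : ℕ} {f : ℕ → ℤ} (h : Pre l f) (i : ℕ) : Even (B0 l f i) := by
  unfold B0
  rw [r_top, add_assoc]
  refine (h.ev _).add ?_
  split_ifs with h1 h2 h2
  · omega
  · rw [add_zero]; exact (Int.even_pow.2 ⟨by decide, by omega⟩)
  · decide
  · simp

lemma B1_even {l : ℕ} {f : ℕ → ℤ} (h : Pre l f) (h₁ i : ℕ) : Even (B1 l f h₁ i) :=
  (B0_even h _).sub (even_two_mul _)

lemma B2_even {l : ℕ} {f : ℕ → ℤ} (h : Pre l f) (h₁ h₂ i : ℕ) : Even (B2 l f h₁ h₂ i) :=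
  (B1_even h _ _).add (even_two_mul _)

lemma B0_big {l : ℕ} {f : ℕ → ℤ} (h : Pre l f) {i : ℕ} (hi : l + 3 ≤ i) : B0 l f i = 0 := by
  unfold B0
  rw [r_top, h.zero _ (by omega)]
  repeat rw [if_neg (by omega)]
  simp

lemma B1_zero_nonneg {l : ℕ} {f : ℕ → ℤ} (h : Pre l f) {h₁ : ℕ} (hh : h₁ + 1 ≤ 2 ^ (l + 2)) :
    0 ≤ B1 l f h₁ 0 := by
  have := h.low2
  have h2 : ((h₁ + 1 : ℕ) : ℤ) ≤ ((2 ^ (l + 2) : ℕ) : ℤ) := by exact_mod_cast hh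
  have h3 : (2 : ℤ) ^ (l + 2) = 2 * 2 ^ (l + 1) := by ring
  push_cast at h2
  unfold B1 B0
  rw [r_top, if_pos (by omega), show l + 2 - (0 + 1) = l + 1 by omega, r]
  simp only [pow_zero, Nat.div_one, zero_add, pow_one, if_neg (show (1 : ℕ) ≠ l + 2 by omega)]
  norm_num
  omega

/-- The Zero rule. -/
lemma zero_step {l : ℕ} {f : ℕ → ℤ} (h : Pre l f) :
    ruleOf (mk (l + 4) f) = Rule.zero ∧
    P (mk (l + 4) f) = mk (l + 6) (cf (B0 l f) (-1) (f 0 - 1) (2 ^ (l + 3) - 1)) := by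
  have hnh : ¬ HaltCond (mk (l + 4) f) := by
    rw [mk_halt]; rintro ⟨-, -, h2⟩; exact h.top h2
  have hr : ruleOf (mk (l + 4) f) = Rule.zero := by
    unfold ruleOf
    rw [if_neg, if_neg hnh, if_pos]
    · exact ⟨(mk_allEven _ _).2 fun i _ => h.ev i, hnh⟩
    · rw [mk_overflow]
      rintro ⟨hc, -⟩
      exact Int.not_even_iff_odd.2 hc (h.ev _)
  refine ⟨hr, ?_⟩
  unfold P
  rw [hr]
  simp only
  rw [mk_set, mk_set, mk_headD, leftmost, mk_getLastD, show ([0, 0] : List ℤ) = [0] ++ [0] from rfl,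
    ← List.append_assoc, mk_snoc, mk_snoc, mk_length]
  refine mk_congr fun i hi => ?_
  rcases i with _ | i
  · simp [cf]
  · simp only [cf, B0]
    rcases lt_trichotomy i (l + 2) with h1 | h1 | h1
    · rw [if_neg (by omega), if_neg (by omega), if_neg (by omega), if_neg (by omega),
        if_neg (by omega)]
      ring
    · subst h1
      rw [if_neg (by omega), if_neg (by omega), if_pos (by omega), if_pos rfl]
      ring
    · have hz := h.zero (i + 1) (by omega)
      rw [hz, if_neg (by omega : ¬ i = l + 2)]
      split_ifs <;> omega

/-- The states of the first descent. -/
lemma phase1 {l : ℕ} {f : ℕ → ℤ} (h : Pre l f) {s : ℕ} (hs : (s : ℤ) ≤ f 0)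
    (hs2 : s ≤ 2 ^ (l + 3) - 1) :
    P^[s + 1] (mk (l + 4) f)
      = mk (l + 6) (cf (B0 l f) (-1) (f 0 - 1 - s) (2 ^ (l + 3) - 1 - s)) := by
  have hp : 2 ^ (l + 5) = 4 * 2 ^ (l + 3) := by ring
  have hp3 : 2 ^ (l + 3) = 2 * 2 ^ (l + 2) := by ring
  have hp' : 0 < 2 ^ (l + 2) := by positivity
  rw [Function.iterate_succ_apply, (zero_step h).2]
  refine run_down (L := l + 5) (fun i _ => B0_even h i) s (by omega) ?_ hs2 (by omega)
  have h0 := h.ev 0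
  rw [Int.even_iff] at *
  push_cast [show 1 ≤ 2 ^ (l + 3) by omega]
  have : (2 : ℤ) ^ (l + 3) = 2 * 2 ^ (l + 2) := by ring
  omega

/-- The first Halve rule. -/
lemma halve1 {l : ℕ} {f : ℕ → ℤ} (h : Pre l f) {x h₁ : ℕ} (hx : f 0 = 2 * x)
    (hh : x + h₁ + 1 = 2 ^ (l + 2)) :
    ruleOf (P^[2 * x + 1] (mk (l + 4) f)) = Rule.halve ∧
    P^[2 * x + 2] (mk (l + 4) f) = mk (l + 5) (cf (B1 l f h₁) 1 (f 1 + x) h₁) ∧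
    (P^[2 * x + 2] (mk (l + 4) f)).sum = (P^[2 * x + 1] (mk (l + 4) f)).sum + 1 := by
  have hp3 : 2 ^ (l + 3) = 2 * 2 ^ (l + 2) := by ring
  have e := phase1 h (s := 2 * x) (by rw [hx]; push_cast; rfl) (by omega)
  rw [Function.iterate_succ_apply' P (2 * x + 1), e]
  have e2 := halve_step (l + 4)
    (cf (B0 l f) (-1) (f 0 - 1 - (2 * x : ℕ)) (2 ^ (l + 3) - 1 - 2 * x))
    (by simp only [cf]; rw [hx]; push_cast; ring)
  refine ⟨e2.1, e2.2.1.trans (mk_congr ?_), e2.2.2⟩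
  rw [show 2 ^ (l + 3) - 1 - 2 * x = 2 * h₁ + 1 by omega]
  intro i _
  rcases i with _ | i
  · simp only [cf, B0]
    rw [r_top, if_pos (by omega), if_neg (by omega), r]
    have hz : ((x + h₁ + 1 : ℕ) : ℤ) = ((2 ^ (l + 2) : ℕ) : ℤ) := by exact_mod_cast hh
    push_cast at hz
    simp only [Nat.sub_zero, ← hz]
    norm_num
    omega
  · simp only [cf, B1, r_double_add_one]
    ring

/-- The states of the ascent. -/
lemma phase2 {l : ℕ} {f : ℕ → ℤ} (h : Pre l f) {x h₁ s : ℕ} (hx : f 0 = 2 * x)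
    (hh : x + h₁ + 1 = 2 ^ (l + 2)) (hs : (s : ℤ) ≤ f 1 + x + 1) (hs2 : h₁ + s < 2 ^ (l + 4)) :
    P^[2 * x + 2 + s] (mk (l + 4) f)
      = mk (l + 5) (cf (B1 l f h₁) 1 (f 1 + x - s) (h₁ + s)) := by
  rw [add_comm, Function.iterate_add_apply, (halve1 h hx hh).2.1]
  refine run_up (L := l + 4) (fun i _ => B1_even h _ i) s hs2 ?_ hs
  have h0 := h.ev 1
  have hz : ((x + h₁ + 1 : ℕ) : ℤ) = ((2 ^ (l + 2) : ℕ) : ℤ) := by exact_mod_cast hh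
  have : (2 : ℤ) ^ (l + 2) = 2 * 2 ^ (l + 1) := by ring
  push_cast at hz
  rw [Int.even_iff, Int.odd_iff] at *
  omega

/-- The second Halve rule. -/
lemma halve2 {l : ℕ} {f : ℕ → ℤ} (h : Pre l f) {x h₁ h₂ t : ℕ} (hx : f 0 = 2 * x)
    (hh : x + h₁ + 1 = 2 ^ (l + 2)) (ht : (t : ℤ) = f 1 + x + 1)
    (hh2 : h₁ + t = 2 * h₂) (hb : h₂ < 2 ^ (l + 3)) :
    ruleOf (P^[2 * x + 2 + t] (mk (l + 4) f)) = Rule.halve ∧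
    P^[2 * x + 3 + t] (mk (l + 4) f)
      = mk (l + 4) (cf (B2 l f h₁ h₂) (-1) (B1 l f h₁ 0 + h₂) h₂) := by
  have hp3 : 2 ^ (l + 4) = 2 * 2 ^ (l + 3) := by ring
  have e := phase2 h hx hh (s := t) (by omega) (by omega)
  rw [show 2 * x + 3 + t = (2 * x + 2 + t) + 1 by ring, Function.iterate_succ_apply' P, e]
  have e2 := halve_step (l + 3) (cf (B1 l f h₁) 1 (f 1 + x - t) (h₁ + t))
    (by simp only [cf]; omega)
  refine ⟨e2.1, e2.2.1.trans (mk_congr ?_)⟩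
  rw [hh2]
  intro i _
  rcases i with _ | i
  · simp only [cf]
    rw [r]
    norm_num
    omega
  · simp only [cf, B2, r_double]
    ring

/-- The states of the second descent. -/
lemma phase3 {l : ℕ} {f : ℕ → ℤ} (h : Pre l f) {x h₁ h₂ t s : ℕ} (hx : f 0 = 2 * x)
    (hh : x + h₁ + 1 = 2 ^ (l + 2)) (ht : (t : ℤ) = f 1 + x + 1)
    (hh2 : h₁ + t = 2 * h₂) (hb : h₂ < 2 ^ (l + 3)) (hs : s ≤ h₂) :
    P^[2 * x + 3 + t + s] (mk (l + 4) f)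
      = mk (l + 4) (cf (B2 l f h₁ h₂) (-1) (B1 l f h₁ 0 + h₂ - s) (h₂ - s)) := by
  rw [add_comm, Function.iterate_add_apply, (halve2 h hx hh ht hh2 hb).2]
  have := B1_zero_nonneg h (h₁ := h₁) (by omega)
  refine run_down (L := l + 3) (fun i _ => B2_even h _ _ i) s hb ?_ hs (by omega)
  have h0 := B1_even h h₁ 0
  rw [Int.even_iff] at *
  omega

lemma nextEmpty_unique {E : State} {m m' : ℕ} (h : NextEmptyAt E m) (h' : NextEmptyAt E m') :
    m = m' := by
  rcases lt_trichotomy m m' with hl | hl | hl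
  · exact absurd h.2.1 (h'.2.2 m h.1 hl)
  · exact hl
  · exact absurd h'.2.1 (h.2.2 m' h'.1 hl)

lemma N_eq {E : State} {m : ℕ} (h : NextEmptyAt E m) : N E = P^[m] E := by
  have hex : ∃ m, NextEmptyAt E m := ⟨m, h⟩
  rw [N, dif_pos hex, nextEmpty_unique hex.choose_spec h]

lemma N_cases (E : State) : N E = [] ∨ ∃ m, 0 < m ∧ N E = P^[m] E := by
  by_cases h : ∃ m, NextEmptyAt E m
  · right
    obtain ⟨m, hm⟩ := h
    exact ⟨m, hm.1, N_eq hm⟩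
  · left; rw [N, dif_neg h]

lemma not_empty_of_nOf {S : State} (h : nOf S ≠ 0) : ¬ IsEmptyState S := fun hc => h hc.2.1

lemma not_empty_of_sum {S : State} (h : ¬ Even S.sum) : ¬ IsEmptyState S := by
  rintro ⟨-, -, hs, -⟩
  rw [sigma, if_pos (by simpa using h)] at hs
  norm_num at hs

lemma nth_of_count {p : ℕ → Prop} [DecidablePred p] {c n : ℕ} (hp : p n) (hc : Nat.count p n = c) :
    Nat.nth p c = n := by
  rw [← hc]; exact Nat.nth_count hp

lemma Nf_big {l : ℕ} {f : ℕ → ℤ} (h : Pre l f) {h₁ h₂ i : ℕ} (hh : h₁ < 2 ^ (l + 2))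
    (hb : h₂ < 2 ^ (l + 3)) (hi : l + 3 < i) : Nf l f h₁ h₂ i = 0 := by
  obtain ⟨i, rfl⟩ : ∃ j, i = j + 1 := ⟨i - 1, by omega⟩
  have hp3 : 2 ^ (l + 2) ≤ 2 ^ (i + 1) := Nat.pow_le_pow_right (by norm_num) (by omega)
  have hp4 : 2 ^ (l + 3) ≤ 2 ^ i := Nat.pow_le_pow_right (by norm_num) (by omega)
  rw [Nf, B2, B1, B0_big h (by omega), r_big (by omega), r_big (by omega)]
  simp

lemma Nf_even {l : ℕ} {f : ℕ → ℤ} (h : Pre l f) (h₁ h₂ i : ℕ) : Even (Nf l f h₁ h₂ i) := by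
  rcases i with _ | i
  · exact B1_even h _ _
  · exact B2_even h _ _ _

/-- The transition from an empty state to the next one, with the values `h₁`, `h₂` of the counter
after the two Halve rules. -/
lemma core {l : ℕ} {f : ℕ → ℤ} (h : Pre l f) {x h₁ h₂ : ℕ} (hx : f 0 = 2 * x)
    (hh : x + h₁ + 1 = 2 ^ (l + 2)) (hh2 : f 1 + 2 ^ (l + 2) = 2 * h₂)
    (hb : h₂ < 2 ^ (l + 3)) :
    N (mk (l + 4) f) = mk (l + 4) (Nf l f h₁ h₂) ∧ hVal (mk (l + 4) f) 1 = h₁ ∧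
    hVal (mk (l + 4) f) 2 = h₂ := by
  have hnn := h.nn1
  obtain ⟨t, ht⟩ : ∃ t : ℕ, (t : ℤ) = f 1 + x + 1 := ⟨(f 1 + x + 1).toNat, by omega⟩
  have hz : ((x + h₁ + 1 : ℕ) : ℤ) = ((2 ^ (l + 2) : ℕ) : ℤ) := by exact_mod_cast hh
  push_cast at hz
  have ht2 : h₁ + t = 2 * h₂ := by zify; linarith
  have hp2 : 2 ^ (l + 2) = 2 * 2 ^ (l + 1) := by ring
  have hp3 : 2 ^ (l + 3) = 2 * 2 ^ (l + 2) := by ring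
  have hp4 : 2 ^ (l + 4) = 2 * 2 ^ (l + 3) := by ring
  have hp5 : 2 ^ (l + 5) = 2 * 2 ^ (l + 4) := by ring
  have hpos : 0 < 2 ^ (l + 1) := by positivity
  have hh2low : 2 ^ (l + 1) ≤ h₂ := by
    have : (2 : ℤ) ^ (l + 2) = 2 * 2 ^ (l + 1) := by ring
    zify; linarith
  have hend := phase3 h hx hh ht ht2 hb (s := h₂) le_rfl
  have hend' : P^[2 * x + 3 + t + h₂] (mk (l + 4) f) = mk (l + 4) (Nf l f h₁ h₂) := by
    rw [hend]
    refine mk_congr fun i _ => ?_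
    rcases i with _ | i
    · simp [cf, Nf]
    · simp [cf, Nf, r_zero]
  have hNE : NextEmptyAt (mk (l + 4) f) (2 * x + 3 + t + h₂) := by
    refine ⟨by omega, ?_, ?_⟩
    · refine ⟨?_, ?_, ?_, ?_⟩
      · rw [hend']; intro hc; simpa using congrArg List.length hc
      · rw [hend, cf_nOf (L := l + 3) (fun i _ => B2_even h _ _ i) (Or.inr rfl) (by omega)]
        simp
      · rw [hend', sigma, if_neg]
        rw [mk_sum, Int.not_odd_iff_even]
        exact Finset.even_sum _ fun i _ => Nf_even h _ _ _
      · have htop : Nf l f h₁ h₂ (l + 2) ≠ 0 := by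
          rw [Nf, B2, B1, B0_big h (by omega), r_big (by omega), r]
          have h1 : 1 ≤ h₂ / 2 ^ (l + 1) := (Nat.one_le_div_iff hpos).2 hh2low
          have h2 : h₂ / 2 ^ (l + 1 + 1) = h₂ / 2 ^ (l + 1) / 2 := by
            rw [pow_succ 2 (l + 1), Nat.div_div_eq_div_mul]
          omega
        rw [hend']
        intro hc
        have hnh : ¬ HaltCond (mk (l + 4) (Nf l f h₁ h₂)) := by
          rw [mk_halt]; rintro ⟨-, -, h2⟩; exact htop h2
        unfold ruleOf at hc
        rw [if_neg hnh] at hc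
        split_ifs at hc
    · intro s hs hs2
      rcases lt_or_ge s (2 * x + 2) with h1 | h1
      · obtain ⟨s, rfl⟩ : ∃ s', s = s' + 1 := ⟨s - 1, by omega⟩
        apply not_empty_of_nOf
        rw [phase1 h (by omega) (by omega), cf_nOf (L := l + 5) (fun i _ => B0_even h i)
          (Or.inr rfl) (by omega)]
        omega
      rcases lt_or_ge s (2 * x + 3 + t) with h2 | h2
      · obtain ⟨s, rfl⟩ := Nat.exists_eq_add_of_le h1
        apply not_empty_of_sum
        rw [phase2 h hx hh (by omega) (by omega), cf_sum_parity (L := l + 4)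
          (fun i _ => B1_even h _ i) (Or.inl rfl) (by omega)]
        have h0 := h.ev 1
        rw [Int.even_iff] at *
        push_cast
        have : (2 : ℤ) ^ (l + 2) = 2 * 2 ^ (l + 1) := by ring
        omega
      · obtain ⟨s, rfl⟩ := Nat.exists_eq_add_of_le h2
        apply not_empty_of_nOf
        rw [phase3 h hx hh ht ht2 hb (by omega), cf_nOf (L := l + 3)
          (fun i _ => B2_even h _ _ i) (Or.inr rfl) (by omega)]
        omega
  refine ⟨(N_eq hNE).trans hend', ?_⟩
  -- apart from the two Halve rules, only Zero and Increment occur before the second one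
  have hnot : ∀ s, s < 2 * x + 2 + t → s ≠ 2 * x + 1 →
      ruleOf (P^[s] (mk (l + 4) f)) ≠ Rule.halve := by
    intro s hs hs2
    rcases s with _ | s
    · rw [Function.iterate_zero, id, (zero_step h).1]; simp
    rcases lt_or_ge s (2 * x) with h1 | h1
    · rw [phase1 h (by omega) (by omega), (cf_step (L := l + 5) (n' := 2 ^ (l + 3) - 1 - s - 1)
        (fun i _ => B0_even h i) (Or.inr ⟨rfl, rfl, by omega⟩) (by omega) ?_ (by omega)).1]
      · simp
      · have : (2 : ℤ) ^ (l + 3) = 2 * 2 ^ (l + 2) := by ring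
        rw [Int.even_iff]
        zify [show s ≤ 2 ^ (l + 3) - 1 by omega, show 1 ≤ 2 ^ (l + 3) by omega]
        omega
    · obtain ⟨s, rfl⟩ := Nat.exists_eq_add_of_le h1
      rw [show 2 * x + s + 1 = 2 * x + 2 + (s - 1) by omega,
        phase2 h hx hh (by omega) (by omega), (cf_step (L := l + 4) (n' := h₁ + (s - 1) + 1)
        (fun i _ => B1_even h _ i) (Or.inl ⟨rfl, rfl, rfl⟩) (by omega) ?_ (by omega)).1]
      · simp
      · have h0 := h.ev 1
        have : (2 : ℤ) ^ (l + 2) = 2 * 2 ^ (l + 1) := by ring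
        rw [Int.even_iff] at *
        push_cast
        omega
  have hr1 := (halve1 h hx hh).1
  have hr2 := (halve2 h hx hh ht ht2 hb).1
  constructor
  · rw [hVal, nth_of_count (n := 2 * x + 1) hr1, (halve1 h hx hh).2.1,
      cf_nOf (L := l + 4) (fun i _ => B1_even h _ i) (Or.inl rfl) (by omega)]
    rw [Nat.count_eq_card_filter_range, Nat.sub_self, Finset.card_eq_zero,
      Finset.filter_eq_empty_iff]
    intro s hs
    have := Finset.mem_range.1 hs
    exact hnot s (by omega) (by omega)
  · rw [hVal, nth_of_count (n := 2 * x + 2 + t) hr2, show 2 * x + 2 + t + 1 = 2 * x + 3 + t by ring,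
      (halve2 h hx hh ht ht2 hb).2,
      cf_nOf (L := l + 3) (fun i _ => B2_even h _ _ i) (Or.inr rfl) (by omega)]
    rw [Nat.count_eq_card_filter_range, show 2 - 1 = 1 from rfl, Finset.card_eq_one]
    refine ⟨2 * x + 1, ?_⟩
    ext s
    rw [Finset.mem_filter, Finset.mem_range, Finset.mem_singleton]
    constructor
    · rintro ⟨hs, hs2⟩
      by_contra hc
      exact hnot s hs hc hs2
    · rintro rfl
      exact ⟨by omega, hr1⟩

/-! ### States out of range -/

/-- The range in which the first descent ends with a Halve rule before the counter reaches `0`, and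
the ascent ends with a Halve rule before the counter reaches `2^(l+4)` and triggers Overflow. -/
def Small (l : ℕ) (f : ℕ → ℤ) : Prop := f 0 < 2 ^ (l + 3) ∧ f 1 < 3 * 2 ^ (l + 2)

lemma params {l : ℕ} {f : ℕ → ℤ} (h : Pre l f) (h0 : f 0 < 2 ^ (l + 3)) :
    ∃ x h₁ h₂ : ℕ, f 0 = 2 * x ∧ x + h₁ + 1 = 2 ^ (l + 2) ∧ f 1 + 2 ^ (l + 2) = 2 * h₂ := by
  obtain ⟨a, ha⟩ := h.ev 0
  obtain ⟨b, hb⟩ := h.ev 1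
  have h1 := h.nn0
  have h2 := h.nn1
  have hp3 : (2 : ℤ) ^ (l + 3) = 2 * 2 ^ (l + 2) := by ring
  have hp2 : (2 : ℤ) ^ (l + 2) = 2 * 2 ^ (l + 1) := by ring
  have hp : (0 : ℤ) < 2 ^ (l + 1) := by positivity
  refine ⟨a.toNat, (2 ^ (l + 2) - 1 - a).toNat, (b + 2 ^ (l + 1)).toNat, by omega, ?_, by omega⟩
  zify
  rw [Int.toNat_of_nonneg (by omega), Int.toNat_of_nonneg (by omega)]
  ring

lemma params_small {l : ℕ} {f : ℕ → ℤ} (h : Pre l f) (hs : Small l f) :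
    ∃ x h₁ h₂ : ℕ, f 0 = 2 * x ∧ x + h₁ + 1 = 2 ^ (l + 2) ∧ f 1 + 2 ^ (l + 2) = 2 * h₂ ∧
      h₂ < 2 ^ (l + 3) := by
  obtain ⟨x, h₁, h₂, h0, h1, h2⟩ := params h hs.1
  refine ⟨x, h₁, h₂, h0, h1, h2, ?_⟩
  have := hs.2
  have hp3 : (2 : ℤ) ^ (l + 3) = 2 * 2 ^ (l + 2) := by ring
  zify
  linarith

lemma P_halt {S : State} (ho : ¬ OverflowCond S) (hh : HaltCond S) : P S = S := by
  simp [P, ruleOf, ho, hh]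

/-- If the next empty state is obtained by a single bump, then both counts stay in range:
otherwise the process halts before the first Halve rule, or the Overflow rule occurs and makes the
state too long or its sum too large. -/
lemma small_of_bump {l : ℕ} {f : ℕ → ℤ} (h : Pre l f) {i : ℕ}
    (hN : N (mk (l + 4) f) = bump (mk (l + 4) f) i) : Small l f := by
  have hlen : (N (mk (l + 4) f)).length = l + 4 := by rw [hN, bump_mk, mk_length]
  have hsum : (N (mk (l + 4) f)).sum ≤ (mk (l + 4) f).sum + 2 := by
    rw [hN, bump_mk, mk_sum, mk_sum, Finset.sum_add_distrib, Finset.sum_ite_eq']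
    split_ifs <;> omega
  obtain ⟨m, hm, hNm⟩ : ∃ m, 0 < m ∧ N (mk (l + 4) f) = P^[m] (mk (l + 4) f) := by
    rcases N_cases (mk (l + 4) f) with h1 | h1
    · rw [h1] at hlen; simp at hlen
    · exact h1
  rw [hNm] at hlen hsum
  have hp : 0 < 2 ^ (l + 1) := by positivity
  have hp2 : 2 ^ (l + 2) = 2 * 2 ^ (l + 1) := by ring
  have hp3 : 2 ^ (l + 3) = 2 * 2 ^ (l + 2) := by ring
  have hp4 : 2 ^ (l + 4) = 2 * 2 ^ (l + 3) := by ring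
  have hz : (0 : ℤ) < 2 ^ (l + 1) := by positivity
  have hz2 : (2 : ℤ) ^ (l + 2) = 2 * 2 ^ (l + 1) := by ring
  have hz3 : (2 : ℤ) ^ (l + 3) = 2 * 2 ^ (l + 2) := by ring
  have hz4 : (2 : ℤ) ^ (l + 4) = 2 * 2 ^ (l + 3) := by ring
  have h0 : f 0 < 2 ^ (l + 3) := by
    by_contra hc
    push Not at hc
    have hcast : ((2 ^ (l + 3) - 1 : ℕ) : ℤ) = 2 ^ (l + 3) - 1 := by
      push_cast [show 1 ≤ 2 ^ (l + 3) by omega]; ring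
    rcases le_or_gt m (2 ^ (l + 3)) with h1 | h1
    · obtain ⟨s, rfl⟩ : ∃ s, m = s + 1 := ⟨m - 1, by omega⟩
      rw [phase1 h (by omega) (by omega), mk_length] at hlen
      omega
    · have e := phase1 h (s := 2 ^ (l + 3) - 1) (by omega) le_rfl
      -- the counter has reached `0` and the two leftmost entries vanish: the process has halted
      have hfix : P (P^[2 ^ (l + 3) - 1 + 1] (mk (l + 4) f))
          = P^[2 ^ (l + 3) - 1 + 1] (mk (l + 4) f) := by
        rw [e, Nat.sub_self, hcast]
        have hcond : HaltCond (mk (l + 6)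
            (cf (B0 l f) (-1) (f 0 - 1 - (2 ^ (l + 3) - 1)) 0)) := by
          rw [mk_halt]
          refine ⟨?_, ?_, ?_⟩
          · intro i _
            rcases i with _ | i
            · have := h.ev 0
              rw [Int.even_iff] at *
              simp only [cf]
              omega
            · simp only [cf, r_zero, mul_zero, add_zero]
              exact B0_even h i
          · simp [cf, r_zero, B0_big h]
          · simp [cf, r_zero, B0_big h]
        have hno : ¬ OverflowCond (mk (l + 6)
            (cf (B0 l f) (-1) (f 0 - 1 - (2 ^ (l + 3) - 1)) 0)) := by
          rw [mk_overflow]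
          rintro ⟨ho, -⟩
          simp [cf, r_zero, B0_big h] at ho
        exact P_halt hno hcond
      obtain ⟨d, hd⟩ := Nat.exists_eq_add_of_lt h1
      rw [show m = (d + 1) + (2 ^ (l + 3) - 1 + 1) by omega, Function.iterate_add_apply,
        Function.iterate_fixed hfix, e, mk_length] at hlen
      omega
  refine ⟨h0, ?_⟩
  by_contra hc
  push Not at hc
  obtain ⟨x, h₁, h₂, hx, hh, hh2⟩ := params h h0
  have hhz : ((x + h₁ + 1 : ℕ) : ℤ) = ((2 ^ (l + 2) : ℕ) : ℤ) := by exact_mod_cast hh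
  push_cast at hhz
  obtain ⟨t, ht⟩ : ∃ t, h₁ + t = 2 ^ (l + 4) - 1 := ⟨2 ^ (l + 4) - 1 - h₁, by omega⟩
  have htz : (h₁ : ℤ) + t = 2 ^ (l + 4) - 1 := by
    zify [show 1 ≤ 2 ^ (l + 4) by omega] at ht; exact ht
  rcases lt_or_ge m (2 * x + 2) with h1 | h1
  · obtain ⟨s, rfl⟩ : ∃ s, m = s + 1 := ⟨m - 1, by omega⟩
    rw [phase1 h (by omega) (by omega), mk_length] at hlen
    omega
  rcases le_or_gt m (2 * x + 2 + t) with h2 | h2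
  · obtain ⟨s, rfl⟩ := Nat.exists_eq_add_of_le h1
    rw [phase2 h hx hh (by omega) (by omega), mk_length] at hlen
    omega
  have e := phase2 h hx hh (s := t) (by omega) (by omega)
  -- at the counter value `2^(l+4) - 1` only the leftmost entry is odd
  have hov : OverflowCond (P^[2 * x + 2 + t] (mk (l + 4) f)) := by
    rw [e, ht, mk_overflow]
    constructor
    · simp only [cf]
      rw [r_top (l + 3), if_neg (by omega), if_pos rfl]
      exact (B1_even h _ _).add_odd (by decide)
    · intro i hi
      rcases i with _ | i
      · have := h.ev 1
        simp only [cf]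
        rw [Int.even_iff] at *
        omega
      · simp only [cf]
        rw [r_top (l + 3), if_pos (by omega)]
        refine (B1_even h _ _).add (Even.mul_left ?_ _)
        exact Int.even_pow.2 ⟨by decide, by omega⟩
  obtain ⟨hs1, hl1⟩ := overflow_sum hov
  rw [← Function.iterate_succ_apply' P] at hs1 hl1
  have hlt : (P^[2 * x + 2 + t] (mk (l + 4) f)).length = l + 5 := by rw [e, mk_length]
  have w1 := iter_weak (mk (l + 4) f) (2 * x + 1)
  have w2 := (halve1 h hx hh).2.2
  have w3 := iter_weak (P^[2 * x + 2] (mk (l + 4) f)) t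
  rw [← Function.iterate_add_apply, add_comm t] at w3
  obtain ⟨d, hd⟩ := Nat.exists_eq_add_of_lt h2
  have w4 := iter_weak (P^[(2 * x + 2 + t).succ] (mk (l + 4) f)) d
  rw [← Function.iterate_add_apply, show d + (2 * x + 2 + t).succ = m by omega] at w4
  omega

/-! ### The orbit of `S_k` -/

/-- Entries of the next empty state, as a function of `f` alone. -/
def NF (l : ℕ) (f : ℕ → ℤ) : ℕ → ℤ :=
  Nf l f (2 ^ (l + 2) - 1 - (f 0 / 2).toNat) ((f 1 + 2 ^ (l + 2)) / 2).toNat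

lemma NF_eq {l : ℕ} {f : ℕ → ℤ} {x h₁ h₂ : ℕ} (hx : f 0 = 2 * x)
    (hh : x + h₁ + 1 = 2 ^ (l + 2)) (hh2 : f 1 + 2 ^ (l + 2) = 2 * h₂) :
    NF l f = Nf l f h₁ h₂ := by
  unfold NF
  congr 1 <;> omega

lemma N_mk {l : ℕ} {f : ℕ → ℤ} (h : Pre l f) (hs : Small l f) :
    N (mk (l + 4) f) = mk (l + 4) (NF l f) := by
  obtain ⟨x, h₁, h₂, h0, h1, h2, h3⟩ := params_small h hs
  rw [NF_eq h0 h1 h2, (core h h0 h1 h2 h3).1]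

/-- Entries of `S_k`, where `2 k = l + 2`. -/
def base (l : ℕ) : ℕ → ℤ
  | 0 => 0
  | i + 1 => if i < l + 2 then 2 ^ (l + 2 - i) else 0

lemma Sk_eq {k l : ℕ} (hk : 2 * k = l + 2) : Sk k = mk (l + 4) (base l) := by
  unfold Sk
  rw [hk]
  change 0 :: (mk (l + 2) _ ++ [0]) = _
  rw [mk_snoc, mk, mk, List.range_succ_eq_map (n := l + 3), List.map_cons, List.map_map]
  congr 1
  apply List.map_congr_left
  intro i hi
  have := List.mem_range.1 hi
  simp only [Function.comp, base]
  split_ifs <;> first | rfl | omega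

/-- The condition shared by all states of the orbit of `S_k`: the entries are even and at least
those of `S_k`. -/
structure Good (l : ℕ) (f : ℕ → ℤ) : Prop where
  ev : ∀ i, Even (f i)
  zero : ∀ i, l + 3 < i → f i = 0
  low : ∀ i, base l i ≤ f i

lemma Good.pre {l : ℕ} {f : ℕ → ℤ} (h : Good l f) : Pre l f where
  ev := h.ev
  zero := h.zero
  nn0 := h.low 0
  nn1 := le_trans (by simp [base]) (h.low 1)
  low2 := le_trans (by simp [base]) (h.low 2)
  top := by
    have := h.low (l + 2)
    simp only [base, if_pos (show l + 1 < l + 2 by omega), show l + 2 - (l + 1) = 1 by omega] at this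
    omega

lemma base_good (l : ℕ) : Good l (base l) where
  ev i := by
    rcases i with _ | i
    · simp [base]
    · simp only [base]
      split_ifs
      · exact Int.even_pow.2 ⟨by decide, by omega⟩
      · simp
  zero i hi := by
    obtain ⟨i, rfl⟩ : ∃ j, i = j + 1 := ⟨i - 1, by omega⟩
    simp only [base]
    rw [if_neg (by omega)]
  low i := le_rfl

/-- The entries `g` arise from `f` by adding `2` to the entry of index `j`. -/
def Bumps (l : ℕ) (f g : ℕ → ℤ) (j : ℕ) : Prop :=
  j ≤ l + 3 ∧ ∀ i, g i = f i + if i = j then 2 else 0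

lemma Good.bumps {l : ℕ} {f g : ℕ → ℤ} {j : ℕ} (h : Good l f) (hb : Bumps l f g j) : Good l g where
  ev i := by
    rw [hb.2]
    refine (h.ev i).add ?_
    split_ifs <;> simp
  zero i hi := by
    rw [hb.2, h.zero i hi, if_neg (by have := hb.1; omega)]; rfl
  low i := by
    rw [hb.2]
    have := h.low i
    split_ifs <;> omega

/-- The first step of the orbit, `N(S_k) = S_k[2 k + 1]`. -/
lemma base_bumps (l : ℕ) : Bumps l (base l) (NF l (base l)) (l + 3) := by
  refine ⟨le_rfl, ?_⟩
  have hp : 0 < 2 ^ (l + 2) := by positivity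
  rw [NF_eq (x := 0) (h₁ := 2 ^ (l + 2) - 1) (h₂ := 2 ^ (l + 2)) (by simp [base]) (by omega)
    (by simp [base]; ring)]
  intro i
  rcases i with _ | i
  · simp only [Nf, B1, B0]
    rw [r_top, r_top (l + 1)]
    simp [base]
    ring
  · have hr := r_diff (l + 2) 0 i
    simp only [mul_zero, zero_add, mul_one] at hr
    simp only [Nf, B2, B1, B0]
    rw [hr, r_top, r_top (l + 1), r_top (l + 1)]
    simp only [base]
    rcases lt_trichotomy i l with h | h | h
    · obtain ⟨d, rfl⟩ : ∃ d, l = i + 1 + d := Nat.exists_eq_add_of_lt h |>.imp fun a ha => by omega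
      rw [if_pos (by omega), if_pos (by omega), if_neg (by omega), if_pos (by omega),
        if_pos (by omega), if_neg (by omega), if_pos (by omega), if_neg (by omega),
        show i + 1 + d + 2 - (i + 1 + 1) = d + 1 by omega,
        show i + 1 + d + 1 - (i + 1) = d + 1 by omega,
        show i + 1 + d + 1 - i = d + 2 by omega,
        show i + 1 + d + 2 - i = d + 3 by omega]
      ring
    · subst h
      simp
    · rcases Nat.lt_or_ge i (l + 2) with h3 | h3
      · obtain rfl : i = l + 1 := by omega
        simp
      · rcases Nat.lt_or_ge (l + 2) i with h4 | h4
        · repeat rw [if_neg (by omega)]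
          simp
        · obtain rfl : i = l + 2 := by omega
          simp

/-- Passing from `n - 1` to `n` changes exactly one of the numbers `r n i`. -/
lemma exists_pow_odd {n p : ℕ} (h0 : 0 < n) (h : n < 2 ^ p) :
    ∃ v < p, ∀ i, r n i = r (n - 1) i + if i = v then 1 else 0 := by
  obtain ⟨v, m, ⟨q, rfl⟩, rfl⟩ := Nat.exists_eq_two_pow_mul_odd (n := n) (by omega)
  refine ⟨v, ?_, fun i => r_diff v q i⟩
  have : 2 ^ v < 2 ^ p := lt_of_le_of_lt (Nat.le_mul_of_pos_right _ (by omega)) h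
  exact (Nat.pow_lt_pow_iff_right (by norm_num)).1 this

/-- A single bump is followed by a single bump: a bump at `j ≥ 2` is shifted to `j - 2`, and a bump
at `0` or `1` moves `h₁` or `h₂` by one and so changes a single Gray-code digit. -/
lemma propagate {l : ℕ} {f g : ℕ → ℤ} {j : ℕ} (hf : Pre l f) (hg : Pre l g) (hsf : Small l f)
    (hsg : Small l g) (hb : Bumps l f g j) (hN : NF l f = g) :
    ∃ j', Bumps l g (NF l g) j' ∧ (2 ≤ j → j' + 2 = j) := by
  obtain ⟨x, h₁, h₂, a0, a1, a2, a3⟩ := params_small hf hsf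
  obtain ⟨x', h₁', h₂', b0, b1, b2, b3⟩ := params_small hg hsg
  rw [NF_eq a0 a1 a2] at hN
  rw [NF_eq b0 b1 b2]
  have hB0 : ∀ i, B0 l g i = B0 l f i + if i + 1 = j then 2 else 0 := by
    intro i
    unfold B0
    rw [hb.2]; ring
  have hg0 : g 0 = B0 l f 1 - 2 * r h₁ 0 := by rw [← hN]; rfl
  have hg1 : ∀ i, g (i + 1) = B0 l f (i + 2) - 2 * r h₁ (i + 1) + 2 * r h₂ i := by
    intro i; rw [← hN]; rfl
  have c0 := hb.2 0
  have c1 := hb.2 1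
  rcases j with _ | _ | j
  · simp only [if_pos, one_ne_zero, if_false, add_zero] at c0 c1
    have e2 : h₂' = h₂ := by omega
    have e1 : h₁' = h₁ - 1 := by omega
    obtain ⟨v, hv, hd⟩ := exists_pow_odd (n := h₁) (p := l + 2) (by omega) (by omega)
    refine ⟨v, ⟨by omega, ?_⟩, by omega⟩
    intro i
    rcases i with _ | i
    · rw [hg0, Nf, B1, hB0, e1, hd, if_neg (by omega)]
      split_ifs <;> ring
    · rw [hg1, Nf, B2, B1, hB0, e1, e2, hd (i + 1), if_neg (by omega)]
      split_ifs <;> ring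
  · simp only [zero_add, if_pos, zero_ne_one, if_false, add_zero] at c0 c1
    have e1 : h₁' = h₁ := by omega
    have e2 : h₂ = h₂' - 1 := by omega
    obtain ⟨v, hv, hd⟩ := exists_pow_odd (n := h₂') (p := l + 3) (by omega) (by omega)
    refine ⟨v + 1, ⟨by omega, ?_⟩, by omega⟩
    intro i
    rcases i with _ | i
    · rw [hg0, Nf, B1, hB0, e1, if_neg (by omega), if_neg (by omega)]
      ring
    · rw [hg1, Nf, B2, B1, hB0, e1, hd i, ← e2, if_neg (by omega)]
      by_cases hi : i = v
      · rw [if_pos hi, if_pos (by omega)]; ring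
      · rw [if_neg hi, if_neg (by omega)]; ring
  · rw [if_neg (by omega), add_zero] at c0 c1
    have e1 : h₁' = h₁ := by omega
    have e2 : h₂' = h₂ := by omega
    refine ⟨j, ⟨by have := hb.1; omega, ?_⟩, by omega⟩
    intro i
    rcases i with _ | i
    · rw [hg0, Nf, B1, hB0, e1]
      by_cases hi : 0 = j
      · rw [if_pos hi, if_pos (by omega)]; ring
      · rw [if_neg hi, if_neg (by omega)]; ring
    · rw [hg1, Nf, B2, B1, hB0, e1, e2]
      by_cases hi : i + 1 = j
      · rw [if_pos hi, if_pos (by omega)]; ring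
      · rw [if_neg hi, if_neg (by omega)]; ring

/-- Entries of the states `N^s(S_k)`, as long as the counts stay in range. -/
def fs (l : ℕ) : ℕ → ℕ → ℤ
  | 0 => base l
  | s + 1 => NF l (fs l s)

lemma chain (l : ℕ) (s : ℕ) : (∀ s' ≤ s, Small l (fs l s')) →
    Good l (fs l s) ∧ ∃ j, Bumps l (fs l s) (fs l (s + 1)) j := by
  induction s with
  | zero => intro _; exact ⟨base_good l, _, base_bumps l⟩
  | succ s ih =>
    intro h
    obtain ⟨hg, j, hb⟩ := ih fun s' hs' => h s' (by omega)
    have hg' := hg.bumps hb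
    obtain ⟨j', hj', -⟩ := propagate hg.pre hg'.pre (h s (by omega)) (h (s + 1) le_rfl) hb rfl
    exact ⟨hg', j', hj'⟩

lemma chain_good {l s : ℕ} (h : ∀ s' < s, Small l (fs l s')) : Good l (fs l s) := by
  rcases s with _ | s
  · exact base_good l
  · obtain ⟨hg, j, hb⟩ := chain l s fun s' hs' => h s' (by omega)
    exact hg.bumps hb

lemma chain_N {l s t : ℕ} (h : ∀ s' < s + t, Small l (fs l s')) :
    N^[t] (mk (l + 4) (fs l s)) = mk (l + 4) (fs l (s + t)) := by
  induction t with
  | zero => rfl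
  | succ t ih =>
    rw [Function.iterate_succ_apply', ih fun s' hs' => h s' (by omega),
      N_mk (chain_good fun s' hs' => h s' (by omega)).pre (h _ (by omega))]
    rfl

/-- A bump at `j` is followed by bumps at `j - 2`, `j - 4`, …, and the counts stay in range
meanwhile. -/
lemma descend {l s j : ℕ} (h : ∀ s' ≤ s, Small l (fs l s'))
    (hb : Bumps l (fs l s) (fs l (s + 1)) j) (d : ℕ) : 2 * d ≤ j →
    (∀ s' ≤ s + d, Small l (fs l s')) ∧
      ∃ j', j' + 2 * d = j ∧ Bumps l (fs l (s + d)) (fs l (s + d + 1)) j' := by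
  induction d with
  | zero => intro _; exact ⟨h, j, rfl, hb⟩
  | succ d ih =>
    intro hd
    obtain ⟨hs, j', hj', hb'⟩ := ih (by omega)
    have hsm : Small l (fs l (s + d + 1)) := by
      have := hs (s + d) le_rfl
      unfold Small at *
      rw [hb'.2, hb'.2, if_neg (by omega), if_neg (by omega)]
      simpa using this
    have hg := (chain l (s + d) hs).1
    obtain ⟨j'', hb'', hj''⟩ := propagate hg.pre (hg.bumps hb').pre (hs _ le_rfl) hsm hb' rfl
    refine ⟨fun s' hs' => ?_, j'', by have := hj'' (by omega); omega, hb''⟩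
    rcases Nat.lt_or_ge s' (s + d + 1) with h1 | h1
    · exact hs s' (by omega)
    · obtain rfl : s' = s + d + 1 := by omega
      exact hsm

/-- Every iterate of `N'` on `S_k` is some `N^s(S_k)`, all earlier states being in range. -/
lemma orbit (l : ℕ) (e : ℕ) : ∃ s, (∀ s' < s, Small l (fs l s')) ∧
    N'^[e] (mk (l + 4) (base l)) = mk (l + 4) (fs l s) := by
  induction e with
  | zero => exact ⟨0, by simp, rfl⟩
  | succ e ih =>
    obtain ⟨s, hs, he⟩ := ih
    rw [Function.iterate_succ_apply', he]
    by_cases hex : ∃ i, i < (mk (l + 4) (fs l s)).length ∧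
      N (mk (l + 4) (fs l s)) = bump (mk (l + 4) (fs l s)) i
    · rw [N', dif_pos hex]
      obtain ⟨hi1, hi2⟩ := hex.choose_spec
      generalize hex.choose = i at hi1 hi2
      rw [mk_length] at hi1
      have hgood := chain_good hs
      have hsm := small_of_bump hgood.pre hi2
      have hs2 : ∀ s' ≤ s, Small l (fs l s') := by
        intro s' hs'
        rcases hs'.lt_or_eq with h1 | h1
        · exact hs s' h1
        · rwa [h1]
      obtain ⟨-, j, hb⟩ := chain l s hs2
      have hij : i = j := by
        rw [N_mk hgood.pre hsm, bump_mk] at hi2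
        have h1 := mk_inj hi2 i hi1
        have h2 := hb.2 i
        rw [fs] at h2
        rw [h2, if_pos rfl] at h1
        by_contra hc
        rw [if_neg hc] at h1
        omega
      subst hij
      obtain ⟨hsd, -⟩ := descend hs2 hb (i / 2) (by omega)
      refine ⟨s + (i + 2) / 2, fun s' hs' => hsd s' (by omega), ?_⟩
      exact chain_N fun s' hs' => hsd s' (by omega)
    · rw [N', dif_neg hex]
      exact ⟨s, hs, rfl⟩

/-! ### Aperiodicity -/

lemma N_nil : N [] = [] := by
  have h2 : HaltCond [0, 0] := by
    refine ⟨by simp, by simp, by simp⟩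
  have h3 : ruleOf [0, 0] = Rule.halt := by
    have : ¬ OverflowCond [0, 0] := by simp [OverflowCond, leftmost]
    simp [ruleOf, h2, this]
  have h1 : P [] = [0, 0] := by
    have ho : ¬ OverflowCond [] := by simp [OverflowCond, leftmost]
    have hh : ¬ HaltCond [] := by simp [HaltCond]
    have hz : ZeroCond [] := ⟨by simp, hh⟩
    simp [P, ruleOf, ho, hh, hz]
  have h4 : P [0, 0] = [0, 0] := by simp [P, h3]
  rw [N, dif_neg]
  rintro ⟨m, hm, he, -⟩
  obtain ⟨m, rfl⟩ : ∃ n, m = n + 1 := ⟨m - 1, by omega⟩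
  rw [Function.iterate_succ_apply, h1, Function.iterate_fixed h4] at he
  exact he.2.2.2 h3

lemma N_iter {X : State} (a : ℕ) (h : N^[a] X ≠ []) : ∃ M, a ≤ M ∧ P^[M] X = N^[a] X := by
  induction a with
  | zero => exact ⟨0, le_rfl, rfl⟩
  | succ a ih =>
    rw [Function.iterate_succ_apply'] at h ⊢
    obtain ⟨M, hM, hM2⟩ := ih fun hc => h (by rw [hc, N_nil])
    rcases N_cases (N^[a] X) with h1 | ⟨m, hm, h1⟩
    · exact absurd h1 h
    · exact ⟨m + M, by omega, by rw [h1, ← hM2, Function.iterate_add_apply]⟩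

/-- No empty state recurs under `N`, because every step of `P` other than Halt increases
(sum, length, `-a_0`) lexicographically. -/
lemma aperiodic {l : ℕ} {f : ℕ → ℤ} (h : Pre l f) {a : ℕ}
    (ha : N^[a] (mk (l + 4) f) = mk (l + 4) f) : a = 0 := by
  by_contra hc
  obtain ⟨M, hM, hM2⟩ := N_iter a (X := mk (l + 4) f)
    (by rw [ha]; intro hc; simpa using congrArg List.length hc)
  obtain ⟨M, rfl⟩ : ∃ n, M = n + 1 := ⟨M - 1, by omega⟩
  rw [ha, Function.iterate_succ_apply] at hM2
  have hne : P (mk (l + 4) f) ≠ mk (l + 4) f := by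
    intro hc
    have := congrArg List.length hc
    rw [(zero_step h).2, mk_length, mk_length] at this
    omega
  have h1 := (P_prec (mk (l + 4) f)).resolve_left hne
  rcases iter_prec (P (mk (l + 4) f)) M with h2 | h2
  · exact hne (h2.symm.trans hM2)
  · rw [hM2] at h2
    exact Prec.irrefl _ (h1.trans h2)

/-! ### The states before a bump at `1` -/

/-- Complementing all binary digits of `m` negates the differences `r m i` up to a constant. -/
lemma r_compl {p m h i : ℕ} (hh : m + h + 1 = 2 ^ p) : r h i = r (2 ^ p - 1) i - r m i := by
  have key : ∀ i, h / 2 ^ i + m / 2 ^ i = (2 ^ p - 1) / 2 ^ i := by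
    intro i
    have hpos : 0 < 2 ^ i := by positivity
    rcases le_or_gt i p with hi | hi
    · obtain ⟨d, rfl⟩ := Nat.exists_eq_add_of_le hi
      have e1 := div_pred_of_le (q := 0) (v := i + d) hi
      simp only [mul_zero, zero_add, mul_one] at e1
      rw [e1, Nat.add_sub_cancel_left]
      have hm := Nat.div_add_mod m (2 ^ i)
      have hml := Nat.mod_lt m hpos
      have hlt : m / 2 ^ i < 2 ^ d := by
        rw [Nat.div_lt_iff_lt_mul hpos, ← pow_add, add_comm d]; omega
      obtain ⟨c, hc⟩ : ∃ c, 2 ^ d = m / 2 ^ i + c + 1 := by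
        obtain ⟨c, hc⟩ := Nat.exists_eq_add_of_lt hlt
        exact ⟨c, hc⟩
      have e2 : h / 2 ^ i = c := by
        have hexp : 2 ^ (i + d) = 2 ^ i * (m / 2 ^ i) + c * 2 ^ i + 2 ^ i := by
          rw [pow_add, hc]; ring
        apply Nat.div_eq_of_lt_le
        · omega
        · rw [add_mul, one_mul]; omega
      rw [e2, hc, add_comm, Nat.add_sub_cancel]
    · have : 2 ^ p ≤ 2 ^ i := Nat.pow_le_pow_right (by norm_num) hi.le
      rw [Nat.div_eq_of_lt (by omega), Nat.div_eq_of_lt (by omega), Nat.div_eq_of_lt (by omega)]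
  have a := key i
  have b := key (i + 1)
  unfold r
  omega

lemma r_add {p m i : ℕ} (hm : m < 2 ^ p) : r (2 ^ p + m) i = r (2 ^ p) i + r m i := by
  have key : ∀ i, (2 ^ p + m) / 2 ^ i = 2 ^ p / 2 ^ i + m / 2 ^ i := by
    intro i
    rcases le_or_gt i p with hi | hi
    · exact Nat.add_div_of_dvd_right (pow_dvd_pow 2 hi)
    · have : 2 ^ (p + 1) ≤ 2 ^ i := Nat.pow_le_pow_right (by norm_num) hi
      rw [pow_succ] at this
      rw [Nat.div_eq_of_lt (by omega), Nat.div_eq_of_lt (by omega), Nat.div_eq_of_lt (by omega)]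
  have a := key i
  have b := key (i + 1)
  unfold r
  omega

/-- A state `F` with `N(F) = F[1]` and `h(F) = (2^(l+2) - m - 1, 2^(l+2) + m)`, with entries `f`. -/
structure Turn (l : ℕ) (f : ℕ → ℤ) (m : ℕ) : Prop where
  pre : Pre l f
  lt : m < 2 ^ (l + 2)
  zeroth : f 0 = 2 * m
  next : ∀ i < l + 4,
    Nf l f (2 ^ (l + 2) - m - 1) (2 ^ (l + 2) + m) i = f i + if i = 1 then 2 else 0

/-- The fixed-point equation `N(F) = F[1]` is a recursion from the top entry downwards, so it
determines how the entries of `F` depend on `m`. -/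
lemma Turn.diff {l m m' : ℕ} {f f' : ℕ → ℤ} (h : Turn l f m) (h' : Turn l f' m') (n i : ℕ) :
    l + 3 ≤ i + n →
      f' (i + 1) - f (i + 1) = 2 * (((m' / 2 ^ i : ℕ) : ℤ) - ((m / 2 ^ i : ℕ) : ℤ)) := by
  induction n using Nat.strong_induction_on generalizing i with
  | _ n ih =>
  intro hn
  rcases le_or_gt (l + 3) i with hi | hi
  · have hp : 2 ^ (l + 3) ≤ 2 ^ i := Nat.pow_le_pow_right (by norm_num) hi
    have hp2 : 2 ^ (l + 3) = 2 * 2 ^ (l + 2) := by ring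
    have a := h.lt
    have b := h'.lt
    rw [h.pre.zero _ (by omega), h'.pre.zero _ (by omega), Nat.div_eq_of_lt (by omega),
      Nat.div_eq_of_lt (by omega)]
    simp
  · have a := h.lt
    have b := h'.lt
    have e := h.next (i + 1) (by omega)
    have e' := h'.next (i + 1) (by omega)
    have hi2 : f' (i + 3) - f (i + 3)
        = 2 * (((m' / 2 ^ (i + 2) : ℕ) : ℤ) - ((m / 2 ^ (i + 2) : ℕ) : ℤ)) := by
      rcases Nat.lt_or_ge n 2 with h2 | h2
      · exact ih 0 (by omega) (i + 2) (by omega)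
      · exact ih (n - 2) (by omega) (i + 2) (by omega)
    simp only [Nf, B2, B1, B0] at e e'
    rw [r_compl (p := l + 2) (m := m) (h := 2 ^ (l + 2) - m - 1) (by omega), r_add h.lt] at e
    rw [r_compl (p := l + 2) (m := m') (h := 2 ^ (l + 2) - m' - 1) (by omega), r_add h'.lt] at e'
    simp only [r, show i + 1 + 1 = i + 2 by omega, show i + 1 + 1 + 1 = i + 3 by omega] at e e' hi2 ⊢
    linarith

/-! ### Counting bumps -/

lemma card_multiples {d m m' : ℕ} (h : m ≤ m') :
    ((Finset.Icc (m + 1) m').filter fun e => d ∣ e).card + m / d = m' / d := by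
  induction m', h using Nat.le_induction with
  | base => simp
  | succ n hn ih =>
    rw [← Finset.insert_Icc_right_eq_Icc_add_one (by omega), Finset.filter_insert, Nat.succ_div]
    split_ifs with hd
    · rw [Finset.card_insert_of_notMem (by simp)]; omega
    · omega

/-- Along the orbit, twice the number of bumps at `j` is the total increase of the entry `j`. -/
lemma kappa_telescope {l p j : ℕ} (hj : j ≤ l + 3) (t : ℕ) :
    (∀ s' < p + t, Small l (fs l s')) →
    fs l (p + t) j - fs l p j = 2 * (kappa (mk (l + 4) (fs l p)) t j : ℤ) := by
  induction t with
  | zero => intro _; simp [kappa]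
  | succ t ih =>
    intro h
    have ih' := ih fun s' hs' => h s' (by omega)
    obtain ⟨-, i, hb⟩ := chain l (p + t) fun s' hs' => h s' (by omega)
    have hiff : (N (N^[t] (mk (l + 4) (fs l p))) = bump (N^[t] (mk (l + 4) (fs l p))) j) ↔ j = i := by
      rw [← Function.iterate_succ_apply' N, chain_N (fun s' hs' => h s' (by omega)),
        chain_N (fun s' hs' => h s' (by omega)), bump_mk]
      constructor
      · intro hc
        have h1 := mk_inj hc j (by omega)
        have h2 := hb.2 j
        simp only [if_true] at h1
        by_contra hne
        rw [if_neg hne] at h2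
        rw [show p + t.succ = p + t + 1 from rfl] at h1
        omega
      · rintro rfl
        exact mk_congr fun i _ => hb.2 i
    have hk : kappa (mk (l + 4) (fs l p)) (t + 1) j
        = kappa (mk (l + 4) (fs l p)) t j + if j = i then 1 else 0 := by
      unfold kappa
      rw [Finset.range_add_one, Finset.filter_insert]
      by_cases hji : j = i
      · rw [if_pos (hiff.2 hji), if_pos hji, Finset.card_insert_of_notMem (by simp)]
      · rw [if_neg (fun hc => hji (hiff.1 hc)), if_neg hji, add_zero]
    have h2 := hb.2 j
    rw [hk, show p + (t + 1) = p + t + 1 from rfl, h2]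
    push_cast
    split_ifs <;> linarith

lemma fs_mono {l p t j : ℕ} (h : ∀ s' < p + t, Small l (fs l s')) (hj : j ≤ l + 3) :
    fs l p j ≤ fs l (p + t) j := by
  have := kappa_telescope hj t h
  omega

/-- Entries of `N⁻¹(E)` for a `1`-rooted state `E` of the orbit. -/
lemma turn_of {l p m : ℕ} {F : State} (hs : ∀ s' < p, Small l (fs l s'))
    (hNF : N F = mk (l + 4) (fs l p)) (hF1 : bump F 1 = mk (l + 4) (fs l p))
    (hm : m < 2 ^ (l + 2)) (hh₁ : hVal F 1 = 2 ^ (l + 2) - m - 1)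
    (hh₂ : hVal F 2 = 2 ^ (l + 2) + m) :
    ∃ f, Turn l f m ∧ ∀ i ≤ l + 3, fs l p i = f i + if i = 1 then 2 else 0 := by
  have hlen : F.length = l + 4 := by
    have := congrArg List.length hF1
    simpa [bump] using this
  -- entries are extended by `0` beyond the length, as `Pre` requires
  obtain ⟨f, hf, hfz⟩ : ∃ f : ℕ → ℤ, F = mk (l + 4) f ∧ ∀ i, l + 3 < i → f i = 0 := by
    refine ⟨fun i => F.getD i 0, ?_, fun i hi => ?_⟩
    · rw [← hlen]; exact eq_mk F
    · exact List.getD_eq_default _ _ (by omega)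
  subst hf
  have hrel : ∀ i ≤ l + 3, fs l p i = f i + if i = 1 then 2 else 0 := by
    intro i hi
    rw [bump_mk] at hF1
    exact (mk_inj hF1 i (by omega)).symm
  have hg := chain_good hs
  have hpow : (2 : ℤ) ^ (l + 2) = 2 * 2 ^ (l + 1) := by ring
  have hpos : (0 : ℤ) < 2 ^ (l + 1) := by positivity
  have hpos' : (0 : ℤ) < 2 ^ l := by positivity
  have hpow' : (2 : ℤ) ^ (l + 1) = 2 * 2 ^ l := by ring
  have hgp := hg.pre
  have r0 := hrel 0 (by omega)
  have r1 := hrel 1 (by omega)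
  have r2 := hrel 2 (by omega)
  have rt := hrel (l + 2) (by omega)
  have low1 := hg.low 1
  have low2 := hgp.low2
  simp only [zero_ne_one, if_false, add_zero] at r0
  simp only [if_true] at r1
  rw [if_neg (by omega), add_zero] at r2 rt
  simp only [base, if_pos (show 0 < l + 2 by omega), Nat.sub_zero] at low1
  have hpre : Pre l f := by
    refine ⟨fun i => ?_, hfz, ?_, ?_, ?_, ?_⟩
    · rcases Nat.lt_or_ge (l + 3) i with h | h
      · rw [hfz i h]; simp
      · have e1 := hg.ev i
        have e2 := hrel i h
        rw [Int.even_iff] at *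
        split_ifs at e2 <;> omega
    · have := hgp.nn0; omega
    · omega
    · omega
    · have := hgp.top; rwa [rt] at this
  have hsm : Small l f := small_of_bump hpre (hNF.trans hF1.symm)
  obtain ⟨x, h₁, h₂, c0, c1, c2, c3⟩ := params_small hpre hsm
  obtain ⟨k1, k2, k3⟩ := core hpre c0 c1 c2 c3
  rw [k2] at hh₁
  rw [k3] at hh₂
  subst hh₁ hh₂
  refine ⟨f, ⟨hpre, hm, ?_, fun i hi => ?_⟩, hrel⟩
  · rw [c0]; congr 2; omega
  · rw [← hrel i (by omega)]
    exact mk_inj (k1.symm.trans hNF) i hi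

/-- In the setting of the previous proposition — `E` a `1`-rooted embanked
state with `h(N⁻¹(E)) = (2^{2k} - m - 1, 2^{2k} + m)`, `ν₂(m)` odd, `m'` the next number of
odd `2`-adic valuation, and `E'` the unique `1`-rooted embanked state reached from `E` with
`h(N⁻¹(E')) = (2^{2k} - m' - 1, 2^{2k} + m')` (reached from `E` by `t` applications of `N`) —
for every `j ∈ [0, 2k+1]`, `κ_{E→E'}(j)` equals the number of integers
`e ∈ [m+1, m']` divisible by `max(1, 2^{j-1})`. -/
theorem statement_13 (k : ℕ) (E F E' F' : State) (m m' t : ℕ)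
    (hRE : RootedEmbanked k E)
    (hF : IsEmptyState F) (hNF : N F = E) (hF1 : bump F 1 = E)
    (hm : m < 2 ^ (2 * k) - 2) (hv : Odd (padicValNat 2 m))
    (hh₁ : hVal F 1 = 2 ^ (2 * k) - m - 1) (hh₂ : hVal F 2 = 2 ^ (2 * k) + m)
    (hm' : IsLeast {x : ℕ | m < x ∧ x ≤ 2 ^ (2 * k) - 2 ∧ Odd (padicValNat 2 x)} m')
    (hRE' : RootedEmbanked k E') (hreach : Reaches E E')
    (hF' : IsEmptyState F') (hNF' : N F' = E') (hF'1 : bump F' 1 = E')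
    (hh₁' : hVal F' 1 = 2 ^ (2 * k) - m' - 1) (hh₂' : hVal F' 2 = 2 ^ (2 * k) + m')
    (ht : N^[t] E = E') :
    ∀ j ≤ 2 * k + 1,
      kappa E t j =
        ((Finset.Icc (m + 1) m').filter fun e => max 1 (2 ^ (j - 1)) ∣ e).card := by
  obtain ⟨l, hl⟩ : ∃ l, 2 * k = l + 2 := by
    rcases k with _ | k
    · simp at hm
    · exact ⟨2 * k, by ring⟩
  obtain ⟨⟨hmm, hm'b, -⟩, -⟩ := hm'
  obtain ⟨-, e, he⟩ := hRE
  obtain ⟨-, e', he'⟩ := hRE'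
  rw [Sk_eq hl] at he he'
  obtain ⟨p, hp, hpe⟩ := orbit l e
  obtain ⟨q, hq, hqe⟩ := orbit l e'
  rw [hl] at hm hh₁ hh₂ hm'b hh₁' hh₂' ⊢
  obtain rfl : E = mk (l + 4) (fs l p) := he.symm.trans hpe
  obtain rfl : E' = mk (l + 4) (fs l q) := he'.symm.trans hqe
  obtain ⟨f, hT, hrel⟩ := turn_of hp hNF hF1 (by omega) hh₁ hh₂
  obtain ⟨f', hT', hrel'⟩ := turn_of hq hNF' hF'1 (by omega) hh₁' hh₂'
  have hpq : p < q := by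
    -- entries never decrease along the orbit, while `a_0` grows from `2 m` to `2 m'`
    by_contra hc
    obtain ⟨d, rfl⟩ := Nat.exists_eq_add_of_le (not_lt.1 hc)
    have h1 := fs_mono (p := q) (t := d) (j := 0) hp (by omega)
    have h2 := hrel 0 (by omega)
    have h3 := hrel' 0 (by omega)
    simp only [zero_ne_one, if_false, add_zero] at h2 h3
    have h4 := hT.zeroth
    have h5 := hT'.zeroth
    omega
  obtain ⟨d, rfl⟩ := Nat.exists_eq_add_of_le hpq.le
  have hd : N^[d] (mk (l + 4) (fs l p)) = mk (l + 4) (fs l (p + d)) := chain_N hq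
  -- the number of steps from `E` to `E'` is unique since no state recurs
  have htd : t = d := by
    rcases Nat.le_total t d with h | h
    · obtain ⟨c, rfl⟩ := Nat.exists_eq_add_of_le h
      rw [add_comm t c, Function.iterate_add_apply, ht, add_comm c t] at hd
      have := aperiodic (chain_good hq).pre hd
      omega
    · obtain ⟨c, rfl⟩ := Nat.exists_eq_add_of_le h
      rw [add_comm d c, Function.iterate_add_apply, hd] at ht
      have := aperiodic (chain_good hq).pre ht
      omega
  subst htd
  intro j hj
  have hk := kappa_telescope (by omega : j ≤ l + 3) t hq
  rw [hrel j (by omega), hrel' j (by omega)] at hk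
  have hc := card_multiples (d := max 1 (2 ^ (j - 1))) hmm.le
  rw [max_eq_right (Nat.one_le_two_pow)] at hc ⊢
  rcases j with _ | j
  · have h4 := hT.zeroth
    have h5 := hT'.zeroth
    simp only [Nat.zero_sub, pow_zero, Nat.div_one] at hc ⊢
    omega
  · have hD := hT.diff hT' (l + 3) j (by omega)
    rw [Nat.add_sub_cancel] at hc ⊢
    omega

end Skelet17
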